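/- Assume p_1,…,p_m are positive rational numbers, and let (V, p) be a feasible quiver datum. Then there exist a tuple A of invertible matrices (A_{\underline i} ∈ GL(d_i, ℝ), A_j ∈ GL(n_j, ℝ)) and dimension vectors d^1, …, d^s such that: (1) d^1 + ⋯ + d^s = (d_1,…,d_k,n_1,…,n_m) and ∑_i d^ℓ_{\underline i} = ∑_j p_j d^ℓ_j for every ℓ ∈ [s]; (2) A·V is block upper-triangular of type (d^s,…,d^1), i.e., each matrix (A·V)_a = A_j V_a A_{\underline i}^{-1} is block upper-triangular with diagonal blocks of sizes d^ℓ_j × d^ℓ_{\underline i}; (3) the datum (Ṽ, p) is extremizable, where Ṽ := diag(A·V) is obtained from A·V by replacing each matrix by its block-diagonal part; and furthermore cap(V, p) = cap(A^{-1}·Ṽ, p). -/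

import Mathlib

open Matrix BigOperators

/-- The value of the capacity functional of a quiver datum `(V, p)` at a tuple `Y`
of `n j × n j` matrices. -/
noncomputable def capVal {k m : ℕ} {d : Fin k → ℕ} {n : Fin m → ℕ} {A : Fin k → Fin m → ℕ}
    (p : Fin m → ℝ)
    (V : ∀ i : Fin k, ∀ j : Fin m, Fin (A i j) → Matrix (Fin (n j)) (Fin (d i)) ℝ)
    (Y : ∀ j : Fin m, Matrix (Fin (n j)) (Fin (n j)) ℝ) : ℝ :=
  (∏ i : Fin k, (∑ j : Fin m, p j • ∑ a : Fin (A i j), (V i j a)ᵀ * Y j * V i j a).det) /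
    ∏ j : Fin m, (Y j).det ^ (p j)

/-- The capacity `cap(V, p)` of a quiver datum: the infimum of the capacity functional
over all tuples of positive definite matrices. -/
noncomputable def cap {k m : ℕ} {d : Fin k → ℕ} {n : Fin m → ℕ} {A : Fin k → Fin m → ℕ}
    (p : Fin m → ℝ)
    (V : ∀ i : Fin k, ∀ j : Fin m, Fin (A i j) → Matrix (Fin (n j)) (Fin (d i)) ℝ) : ℝ :=
  sInf { r : ℝ | ∃ Y : ∀ j : Fin m, Matrix (Fin (n j)) (Fin (n j)) ℝ,
    (∀ j, (Y j).PosDef) ∧ r = capVal p V Y }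

/-- A quiver datum `(V, p)` is extremizable if it is feasible (`cap(V,p) > 0`) and the
infimum defining the capacity is attained at some tuple of positive definite matrices. -/
def Extremizable {k m : ℕ} {d : Fin k → ℕ} {n : Fin m → ℕ} {A : Fin k → Fin m → ℕ}
    (p : Fin m → ℝ)
    (V : ∀ i : Fin k, ∀ j : Fin m, Fin (A i j) → Matrix (Fin (n j)) (Fin (d i)) ℝ) : Prop :=
  0 < cap p V ∧ ∃ Y : ∀ j : Fin m, Matrix (Fin (n j)) (Fin (n j)) ℝ,
    (∀ j, (Y j).PosDef) ∧ capVal p V Y = cap p V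

/-- A quiver datum `(V, p)` is geometric. -/
def IsGeometric {k m : ℕ} {d : Fin k → ℕ} {n : Fin m → ℕ} {A : Fin k → Fin m → ℕ}
    (p : Fin m → ℝ)
    (V : ∀ i : Fin k, ∀ j : Fin m, Fin (A i j) → Matrix (Fin (n j)) (Fin (d i)) ℝ) : Prop :=
  (∀ i, ∑ j : Fin m, p j • ∑ a : Fin (A i j), (V i j a)ᵀ * V i j a = 1) ∧
  (∀ j, ∑ i : Fin k, ∑ a : Fin (A i j), V i j a * (V i j a)ᵀ = 1)

/-- The embedding of the `ℓ`-th block into the concatenation: `fembed f ℓ r` is the index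
of position `r` of block `ℓ`, the blocks being laid out in increasing order of `ℓ`. -/
def fembed {s : ℕ} (f : Fin s → ℕ) (ℓ : Fin s) (r : Fin (f ℓ)) : Fin (∑ ℓ' : Fin s, f ℓ') :=
  ⟨(∑ ℓ' ∈ Finset.univ.filter (fun ℓ' => ℓ' < ℓ), f ℓ') + (r : ℕ), by
    have h2 : f ℓ + ∑ ℓ' ∈ Finset.univ.filter (fun ℓ' => ℓ' < ℓ), f ℓ' ≤ ∑ ℓ' : Fin s, f ℓ' := by
      rw [← Finset.sum_insert (by simp)]
      exact Finset.sum_le_sum_of_subset (Finset.subset_univ _)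
    have h3 := r.isLt
    omega⟩

/-!
The value of the capacity functional is equivariant under changes of coordinates. Rescaling one
diagonal block of a block triangular datum multiplies the off-diagonal block by an arbitrarily small
`ε`. Comparing capacities as `ε` tends to `0` shows that feasibility forces the semistability
inequality for every subrepresentation, and that the capacity is multiplicative when equality holds.

In an orthonormal frame adapted to `Y` the matrices `Y j` are diagonal, and choosing a maximal minor
at every source bounds the functional from below by an exponential in the logarithms of the
eigenvalues. For rows chosen greedily along the ordering of the eigenvalues, the exponent is a
combination of the semistability defects of coordinate subspaces with nonnegative coefficients. If
all proper defects in all frames are positive, compactness of the set of frames makes the functional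
coercive modulo scaling, so its minimum is attained. Otherwise some defect vanishes, the datum
splits into two smaller feasible blocks whose capacities multiply, and one inducts.
-/

/-! ### Real matrices -/

section RealMatrix

variable {ι κ : Type*} [Fintype ι]

lemma posSemidef_transpose_mul_mul [Finite κ] {Y : Matrix ι ι ℝ} (hY : Y.PosSemidef)
    (W : Matrix ι κ ℝ) : (Wᵀ * Y * W).PosSemidef := by
  have := Fintype.ofFinite κ
  simpa using hY.conjTranspose_mul_mul_same W

lemma posDef_transpose_mul_mul [Finite κ] [DecidableEq κ] {Y : Matrix ι ι ℝ} (hY : Y.PosDef)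
    {W : Matrix ι κ ℝ} {W' : Matrix κ ι ℝ} (h : W' * W = 1) : (Wᵀ * Y * W).PosDef := by
  have := Fintype.ofFinite κ
  simpa using hY.conjTranspose_mul_mul_same (B := W)
    (Function.LeftInverse.injective (g := W'.mulVec) fun x => by simp [h])

variable [Fintype κ] [DecidableEq ι] [DecidableEq κ]

lemma exists_orthogonal_diagonalization {Y : Matrix ι ι ℝ} (hY : Y.PosDef) :
    ∃ Q ∈ orthogonalGroup ι ℝ, ∃ l : ι → ℝ, (∀ r, 0 < l r) ∧ Y = Qᵀ * diagonal l * Q := by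
  refine ⟨_, Unitary.star_mem hY.isHermitian.eigenvectorUnitary.2, _, hY.eigenvalues_pos, ?_⟩
  simpa [Unitary.conjStarAlgAut_apply, star_eq_conjTranspose, Function.comp_def]
    using hY.isHermitian.spectral_theorem

lemma isCompact_orthogonalGroup : IsCompact (orthogonalGroup ι ℝ : Set (Matrix ι ι ℝ)) := by
  have hclosed : IsClosed (orthogonalGroup ι ℝ : Set (Matrix ι ι ℝ)) := by
    have : (orthogonalGroup ι ℝ : Set (Matrix ι ι ℝ)) = {Q | Q * Qᵀ = 1} :=
      Set.ext fun Q => mem_orthogonalGroup_iff ι ℝ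
    exact this ▸ isClosed_eq (by fun_prop) continuous_const
  refine (isCompact_univ_pi fun _ => isCompact_univ_pi fun _ =>
    isCompact_Icc (a := (-1 : ℝ)) (b := 1)).of_isClosed_subset hclosed fun Q hQ r _ s _ => ?_
  exact abs_le.1 (entry_norm_bound_of_unitary hQ r s)

lemma det_transpose_mul_mul_of_orthogonal {Q : Matrix ι ι ℝ} (hQ : Q ∈ orthogonalGroup ι ℝ)
    (M : Matrix ι ι ℝ) : (Qᵀ * M * Q).det = M.det := by
  rw [det_mul_right_comm, (mem_orthogonalGroup_iff' ι ℝ).1 hQ, one_mul]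

lemma one_le_det_one_add {K : Matrix ι ι ℝ} (hK : K.PosSemidef) : 1 ≤ (1 + K).det := by
  obtain ⟨Q, hQ, l, -, hKQ⟩ := exists_orthogonal_diagonalization (PosDef.one.add_posSemidef hK)
  have hQQ := (mem_orthogonalGroup_iff ι ℝ).1 hQ
  have hdiag : diagonal l = 1 + Qᵀᵀ * K * Qᵀ := by
    calc diagonal l = (Q * Qᵀ) * diagonal l * (Q * Qᵀ) := by rw [hQQ, one_mul, mul_one]
      _ = Q * (Qᵀ * diagonal l * Q) * Qᵀ := by simp only [Matrix.mul_assoc]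
      _ = 1 + Qᵀᵀ * K * Qᵀ := by
        rw [← hKQ, mul_add, mul_one, add_mul, hQQ, transpose_transpose]
  have hl : ∀ r, 1 ≤ l r := fun r => by
    have h := congrFun (congrFun hdiag r) r
    rw [diagonal_apply_eq, Matrix.add_apply, one_apply_eq] at h
    linarith [(posSemidef_transpose_mul_mul hK Qᵀ).diag_nonneg (i := r)]
  rw [hKQ, det_transpose_mul_mul_of_orthogonal hQ, det_diagonal]
  exact Finset.one_le_prod fun r _ => hl r

lemma exists_isUnit_eq_transpose_mul_self {B : Matrix ι ι ℝ} (hB : B.PosDef) :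
    ∃ S : Matrix ι ι ℝ, IsUnit S.det ∧ B = Sᵀ * S := by
  obtain ⟨Q, -, l, hl, rfl⟩ := exists_orthogonal_diagonalization hB
  have h : diagonal l = diagonal (fun r => √(l r)) * diagonal fun r => √(l r) := by
    simp [fun r => Real.mul_self_sqrt (hl r).le]
  have hS : Qᵀ * diagonal l * Q =
      (diagonal (fun r => √(l r)) * Q)ᵀ * (diagonal (fun r => √(l r)) * Q) := by
    rw [h, transpose_mul, diagonal_transpose]
    simp only [Matrix.mul_assoc]
  refine ⟨_, isUnit_iff_ne_zero.2 fun h0 => hB.det_pos.ne' ?_, hS⟩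
  rw [hS, det_mul, h0, mul_zero]

lemma det_le_det_add {B C : Matrix ι ι ℝ} (hB : B.PosSemidef) (hC : C.PosSemidef) :
    B.det ≤ (B + C).det := by
  by_cases h : B.det = 0
  · exact h ▸ (hB.add hC).det_nonneg
  obtain ⟨S, hS, rfl⟩ := exists_isUnit_eq_transpose_mul_self (hB.posDef_iff_det_ne_zero.2 h)
  have hST : Sᵀ * S⁻¹ᵀ = 1 := by rw [← transpose_mul, nonsing_inv_mul _ hS, transpose_one]
  have hsum : Sᵀ * S + C = Sᵀ * (1 + S⁻¹ᵀ * C * S⁻¹) * S := by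
    rw [mul_add, mul_one, add_mul, Matrix.mul_assoc S⁻¹ᵀ, ← Matrix.mul_assoc Sᵀ, hST, one_mul,
      Matrix.mul_assoc C, nonsing_inv_mul _ hS, mul_one]
  have hK := one_le_det_one_add (posSemidef_transpose_mul_mul hC S⁻¹)
  rw [hsum, det_mul_right_comm, det_mul (Sᵀ * S)]
  exact le_mul_of_one_le_right hB.det_nonneg hK

lemma posDef_fromBlocks_zero {ι κ : Type*} [Finite ι] [Finite κ] {A : Matrix ι ι ℝ}
    {D : Matrix κ κ ℝ} (hA : A.PosDef) (hD : D.PosDef) : (fromBlocks A 0 0 D).PosDef := by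
  classical
  have := Fintype.ofFinite ι
  have := Fintype.ofFinite κ
  have := hA.isUnit.invertible
  have h : (fromBlocks A 0 0 D).PosSemidef := by
    simpa using (PosDef.fromBlocks₁₁ (0 : Matrix ι κ ℝ) D hA).2 (by simpa using hD.posSemidef)
  rw [h.posDef_iff_det_ne_zero, det_fromBlocks_zero₂₁]
  exact (mul_pos hA.det_pos hD.det_pos).ne'

/- Pass to the Schur complement of `A`: adding `D` to the lower right block adds `D` to it. -/
lemma det_mul_det_le_det_fromBlocks {A : Matrix ι ι ℝ} {B : Matrix ι κ ℝ} {C D : Matrix κ κ ℝ}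
    (h : (fromBlocks A B Bᵀ C).PosSemidef) (hD : D.PosSemidef) :
    A.det * D.det ≤ (fromBlocks A B Bᵀ (C + D)).det := by
  have hA : A.PosSemidef := h.submatrix Sum.inl
  by_cases h0 : A.det = 0
  · let W : Matrix κ (ι ⊕ κ) ℝ := fromCols 0 1
    have hW : fromBlocks 0 0 0 D = Wᵀ * D * W := by
      ext (x | x) (y | y) <;> simp [W, mul_apply, one_apply]
    have hD' := hW ▸ posSemidef_transpose_mul_mul hD _
    rw [h0, zero_mul]
    simpa [fromBlocks_add] using (h.add hD').det_nonneg
  · have hA' := hA.posDef_iff_det_ne_zero.2 h0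
    have := hA'.isUnit.invertible
    have hS : (C - Bᵀ * A⁻¹ * B).PosSemidef := by
      simpa using (PosDef.fromBlocks₁₁ B C hA').1 (by simpa using h)
    have hadd : C + D - Bᵀ * ⅟A * B = D + (C - Bᵀ * A⁻¹ * B) := by
      rw [invOf_eq_nonsing_inv]; abel
    rw [det_fromBlocks₁₁, hadd]
    exact mul_le_mul_of_nonneg_left (det_le_det_add hD hS) hA.det_nonneg

lemma exists_block_ldl {Y : Matrix (ι ⊕ κ) (ι ⊕ κ) ℝ} (hY : Y.PosDef) :
    ∃ (Y₁ : Matrix ι ι ℝ) (Y₂ : Matrix κ κ ℝ) (Z : Matrix ι κ ℝ), Y₁.PosDef ∧ Y₂.PosDef ∧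
      Y = (fromBlocks 1 Z 0 1)ᵀ * fromBlocks Y₁ 0 0 Y₂ * fromBlocks 1 Z 0 1 := by
  obtain ⟨a, b, b', c, rfl⟩ : ∃ a b b' c, Y = fromBlocks a b b' c :=
    ⟨_, _, _, _, (fromBlocks_toBlocks Y).symm⟩
  have hb : b' = bᵀ := (isHermitian_fromBlocks_iff.1 hY.isHermitian).2.1.symm
  have ha : a.PosDef := hY.submatrix Sum.inl_injective
  have := ha.isUnit.invertible
  have hat : (⅟a)ᵀ = ⅟a := by
    rw [invOf_eq_nonsing_inv]; exact ha.inv.isHermitian.eq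
  have hldl : fromBlocks a b b' c = (fromBlocks 1 (⅟a * b) 0 1)ᵀ *
      fromBlocks a 0 0 (c - b' * ⅟a * b) * fromBlocks 1 (⅟a * b) 0 1 := by
    rw [fromBlocks_eq_of_invertible₁₁ a b b' c, fromBlocks_transpose, transpose_mul, hat, ← hb]
    simp only [transpose_one, transpose_zero]
  refine ⟨a, c - b' * ⅟a * b, ⅟a * b, ha, ?_, hldl⟩
  have hpsd : (c - b' * ⅟a * b).PosSemidef := by
    subst hb
    simpa using (PosDef.fromBlocks₁₁ b c ha).1 (by simpa using hY.posSemidef)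
  rw [hpsd.posDef_iff_det_ne_zero]
  exact right_ne_zero_of_mul (det_fromBlocks₁₁ a b b' c ▸ hY.det_pos.ne')

end RealMatrix

/-! ### Changes of coordinates -/

/-- An invertible real matrix with columns indexed by `ι` and rows indexed by `κ`, bundled with
its inverse: a linear change of coordinates from `ι → ℝ` to `κ → ℝ`. The two index types may differ,
so that block decompositions can be expressed with sum types. -/
structure InvertibleMatrix (ι κ : Type*) [Fintype ι] [DecidableEq ι] [Fintype κ]
    [DecidableEq κ] where
  mat : Matrix κ ι ℝ
  inv : Matrix ι κ ℝ
  mat_mul_inv : mat * inv = 1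
  inv_mul_mat : inv * mat = 1

namespace InvertibleMatrix

attribute [simp] mat_mul_inv inv_mul_mat

variable {ι κ μ ν : Type*} [Fintype ι] [DecidableEq ι] [Fintype κ] [DecidableEq κ]
  [Fintype μ] [DecidableEq μ] [Fintype ν] [DecidableEq ν]

/-- The identity change of coordinates. -/
@[simps]
def refl (ι : Type*) [Fintype ι] [DecidableEq ι] : InvertibleMatrix ι ι where
  mat := 1
  inv := 1
  mat_mul_inv := mul_one 1
  inv_mul_mat := mul_one 1

/-- The inverse change of coordinates. -/
@[simps]
def symm (P : InvertibleMatrix ι κ) : InvertibleMatrix κ ι where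
  mat := P.inv
  inv := P.mat
  mat_mul_inv := P.inv_mul_mat
  inv_mul_mat := P.mat_mul_inv

/-- The change of coordinates `P` followed by `Q`. -/
@[simps]
def trans (P : InvertibleMatrix ι κ) (Q : InvertibleMatrix κ μ) : InvertibleMatrix ι μ where
  mat := Q.mat * P.mat
  inv := P.inv * Q.inv
  mat_mul_inv := by
    rw [Matrix.mul_assoc, ← Matrix.mul_assoc P.mat, mat_mul_inv, Matrix.one_mul, mat_mul_inv]
  inv_mul_mat := by
    rw [Matrix.mul_assoc, ← Matrix.mul_assoc Q.inv, inv_mul_mat, Matrix.one_mul, inv_mul_mat]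

/-- The block-diagonal sum of two changes of coordinates. -/
@[simps]
def sum (P : InvertibleMatrix ι κ) (Q : InvertibleMatrix μ ν) :
    InvertibleMatrix (ι ⊕ μ) (κ ⊕ ν) where
  mat := fromBlocks P.mat 0 0 Q.mat
  inv := fromBlocks P.inv 0 0 Q.inv
  mat_mul_inv := by simp [fromBlocks_multiply]
  inv_mul_mat := by simp [fromBlocks_multiply]

/-- The permutation matrix that renames coordinates along an equivalence. -/
@[simps]
def ofEquiv (e : ι ≃ κ) : InvertibleMatrix ι κ where
  mat := (1 : Matrix ι ι ℝ).submatrix e.symm id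
  inv := (1 : Matrix ι ι ℝ).submatrix id e.symm
  mat_mul_inv := by simp [← submatrix_mul _ _ _ id _ Function.bijective_id]
  inv_mul_mat := by simp [submatrix_mul_equiv]

/-- A nonzero multiple of the identity. -/
@[simps]
noncomputable def scalar (ι : Type*) [Fintype ι] [DecidableEq ι] {t : ℝ} (ht : t ≠ 0) :
    InvertibleMatrix ι ι where
  mat := t • 1
  inv := t⁻¹ • 1
  mat_mul_inv := by simp [smul_smul, ht]
  inv_mul_mat := by simp [smul_smul, ht]

/-- An orthogonal matrix as a change of coordinates. -/
@[simps]
def ofOrthogonal {Q : Matrix ι ι ℝ} (hQ : Q ∈ orthogonalGroup ι ℝ) : InvertibleMatrix ι ι where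
  mat := Q
  inv := Qᵀ
  mat_mul_inv := (mem_orthogonalGroup_iff ι ℝ).1 hQ
  inv_mul_mat := (mem_orthogonalGroup_iff' ι ℝ).1 hQ

/-- The unipotent block upper triangular matrix with off-diagonal block `Z`. -/
@[simps]
def unitriangular (Z : Matrix ι κ ℝ) : InvertibleMatrix (ι ⊕ κ) (ι ⊕ κ) where
  mat := fromBlocks 1 Z 0 1
  inv := fromBlocks 1 (-Z) 0 1
  mat_mul_inv := by simp [fromBlocks_multiply]
  inv_mul_mat := by simp [fromBlocks_multiply]

lemma card_eq (P : InvertibleMatrix ι κ) : Fintype.card ι = Fintype.card κ :=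
  square_of_invertible P.inv P.mat P.inv_mul_mat P.mat_mul_inv

lemma isUnit_det (P : InvertibleMatrix ι ι) : IsUnit P.mat.det :=
  isUnit_det_of_right_inverse P.mat_mul_inv

lemma inv_eq_nonsing_inv (P : InvertibleMatrix ι ι) : P.inv = P.mat⁻¹ :=
  (inv_eq_right_inv P.mat_mul_inv).symm

lemma transpose_mat_mul_transpose_inv (P : InvertibleMatrix ι κ) : P.matᵀ * P.invᵀ = 1 := by
  rw [← transpose_mul, inv_mul_mat, transpose_one]

lemma posDef_transpose_mul_mul (P : InvertibleMatrix ι κ) {Y : Matrix κ κ ℝ} (hY : Y.PosDef) :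
    (P.matᵀ * Y * P.mat).PosDef :=
  _root_.posDef_transpose_mul_mul hY P.inv_mul_mat

lemma conj_conj_symm (P : InvertibleMatrix ι κ) (Y : Matrix ι ι ℝ) :
    P.matᵀ * (P.invᵀ * Y * P.inv) * P.mat = Y := by
  calc P.matᵀ * (P.invᵀ * Y * P.inv) * P.mat
      = (P.matᵀ * P.invᵀ) * Y * (P.inv * P.mat) := by simp only [Matrix.mul_assoc]
    _ = Y := by rw [transpose_mat_mul_transpose_inv, inv_mul_mat, one_mul, mul_one]

/-- The square of the determinant of an invertible matrix, which makes sense even when rows and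
columns are indexed by different types. -/
def detSq (P : InvertibleMatrix ι κ) : ℝ := (P.mat * P.matᵀ).det

lemma detSq_pos (P : InvertibleMatrix ι κ) : 0 < P.detSq := by
  have h := _root_.posDef_transpose_mul_mul (PosDef.one (R := ℝ) (n := ι)) (W := P.matᵀ)
    (W' := P.invᵀ) (P.symm.transpose_mat_mul_transpose_inv)
  simpa [detSq] using h.det_pos

lemma det_transpose_mul_mul (P : InvertibleMatrix ι κ) (Y : Matrix κ κ ℝ) :
    (P.matᵀ * Y * P.mat).det = P.detSq * Y.det := by
  rw [detSq, ← det_mul, Matrix.mul_assoc,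
    det_comm' P.transpose_mat_mul_transpose_inv P.symm.transpose_mat_mul_transpose_inv,
    Matrix.mul_assoc, det_mul_comm]

lemma detSq_scalar {t : ℝ} (ht : t ≠ 0) :
    (scalar ι ht).detSq = t ^ (2 * Fintype.card ι) := by
  simp [detSq, pow_mul, sq, smul_smul]

lemma detSq_sum (P : InvertibleMatrix ι κ) (Q : InvertibleMatrix μ ν) :
    (P.sum Q).detSq = P.detSq * Q.detSq := by
  simp [detSq, fromBlocks_transpose, fromBlocks_multiply]

end InvertibleMatrix

/-! ### Quiver data and their capacity -/

/-- A quiver datum on a bipartite quiver with sources `i`, sinks `j` and arrows `α i j` from `i` to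
`j`. Coordinates at the vertices are indexed by arbitrary finite types `D i` and `N j`, so that
block decompositions of the vertex spaces are sums of types. -/
abbrev QuiverDatum {I J : Type*} (D : I → Type*) (N : J → Type*) (α : I → J → Type*) :=
  ∀ i j, α i j → Matrix (N j) (D i) ℝ

namespace QuiverDatum

variable {I J : Type*} {D D' : I → Type*} {N N' : J → Type*} {α : I → J → Type*}
  [∀ i, Fintype (D i)] [∀ j, Fintype (N j)] [∀ i, Fintype (D' i)] [∀ j, Fintype (N' j)]

section BaseChange

variable [∀ i, DecidableEq (D i)] [∀ j, DecidableEq (N j)]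
  [∀ i, DecidableEq (D' i)] [∀ j, DecidableEq (N' j)]

/-- The datum `V` in the coordinates `P i` at the sources and `Q j` at the sinks. -/
def baseChange (P : ∀ i, InvertibleMatrix (D i) (D' i)) (Q : ∀ j, InvertibleMatrix (N j) (N' j))
    (V : QuiverDatum D N α) : QuiverDatum D' N' α :=
  fun i j a => (Q j).mat * V i j a * (P i).inv

lemma baseChange_scalar {t : ℝ} (ht : t ≠ 0) (V : QuiverDatum D N α) :
    V.baseChange (fun i => .scalar (D i) ht) (fun j => .scalar (N j) ht) = V := by
  funext i j a
  simp [baseChange, smul_smul, ht]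

lemma baseChange_refl (V : QuiverDatum D N α) :
    V.baseChange (fun i => .refl (D i)) (fun j => .refl (N j)) = V := by
  funext i j a
  simp [baseChange]

lemma baseChange_symm_baseChange (P : ∀ i, InvertibleMatrix (D i) (D' i))
    (Q : ∀ j, InvertibleMatrix (N j) (N' j)) (V : QuiverDatum D N α) :
    (V.baseChange P Q).baseChange (fun i => (P i).symm) (fun j => (Q j).symm) = V := by
  funext i j a
  calc (Q j).inv * ((Q j).mat * V i j a * (P i).inv) * (P i).mat
      = ((Q j).inv * (Q j).mat) * V i j a * ((P i).inv * (P i).mat) := by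
        simp only [Matrix.mul_assoc]
    _ = V i j a := by simp

end BaseChange

variable [Fintype J] [∀ i j, Fintype (α i j)]

/-- The Gram matrix at the source `i`, whose determinant is a factor of the numerator of the
capacity functional. -/
def gram (p : J → ℝ) (V : QuiverDatum D N α) (Y : ∀ j, Matrix (N j) (N j) ℝ) (i : I) :
    Matrix (D i) (D i) ℝ :=
  ∑ j, p j • ∑ a, (V i j a)ᵀ * Y j * V i j a

variable {p : J → ℝ}

lemma gram_posSemidef {D : I → Type*} [∀ i, Finite (D i)] (hp : ∀ j, 0 < p j)
    (V : QuiverDatum D N α) {Y : ∀ j, Matrix (N j) (N j) ℝ} (hY : ∀ j, (Y j).PosSemidef) (i : I) :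
    (gram p V Y i).PosSemidef :=
  posSemidef_sum _ fun j _ => (posSemidef_sum _ fun a _ =>
    posSemidef_transpose_mul_mul (hY j) (V i j a)).smul (hp j).le

lemma prod_det_rpow_pos [∀ j, DecidableEq (N j)] (p : J → ℝ) {Y : ∀ j, Matrix (N j) (N j) ℝ}
    (hY : ∀ j, (Y j).PosDef) : 0 < ∏ j, (Y j).det ^ p j :=
  Finset.prod_pos fun j _ => Real.rpow_pos_of_pos (hY j).det_pos _

variable [∀ i, DecidableEq (D i)] [∀ j, DecidableEq (N j)]
  [∀ i, DecidableEq (D' i)] [∀ j, DecidableEq (N' j)]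

lemma gram_baseChange (P : ∀ i, InvertibleMatrix (D i) (D' i))
    (Q : ∀ j, InvertibleMatrix (N j) (N' j)) (V : QuiverDatum D N α)
    (Y : ∀ j, Matrix (N' j) (N' j) ℝ) (i : I) :
    gram p (V.baseChange P Q) Y i =
      (P i).invᵀ * gram p V (fun j => (Q j).matᵀ * Y j * (Q j).mat) i * (P i).inv := by
  simp only [gram, baseChange, Matrix.mul_sum, Matrix.sum_mul, transpose_mul, Matrix.mul_smul,
    Matrix.smul_mul, Matrix.mul_assoc]

variable [Fintype I]

/-- The capacity functional of `(V, p)` at `Y`. -/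
noncomputable def value (p : J → ℝ) (V : QuiverDatum D N α)
    (Y : ∀ j, Matrix (N j) (N j) ℝ) : ℝ :=
  (∏ i, (gram p V Y i).det) / ∏ j, (Y j).det ^ p j

lemma continuous_value {T : Type*} [TopologicalSpace T] {V : T → QuiverDatum D N α}
    {Y : T → ∀ j, Matrix (N j) (N j) ℝ} (hV : ∀ i j a, Continuous fun t => V t i j a)
    (hY : ∀ j, Continuous fun t => Y t j) (hYpos : ∀ t j, (Y t j).PosDef) :
    Continuous fun t => value p (V t) (Y t) := by
  have hgram : ∀ i, Continuous fun t => gram p (V t) (Y t) i := fun i =>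
    continuous_finsetSum _ fun j _ => (continuous_finsetSum _ fun a _ =>
      ((hV i j a).matrix_transpose.matrix_mul (hY j)).matrix_mul (hV i j a)).const_smul (p j)
  have hden : ∀ j, Continuous fun t => (Y t j).det ^ p j := fun j =>
    (hY j).matrix_det.rpow_const fun t => .inl (hYpos t j).det_pos.ne'
  exact (continuous_finsetProd _ fun i _ => (hgram i).matrix_det).div
    (continuous_finsetProd _ fun j _ => hden j) fun t => (prod_det_rpow_pos p (hYpos t)).ne'

/-- The capacity of `(V, p)`. -/
noncomputable def capacity (p : J → ℝ) (V : QuiverDatum D N α) : ℝ :=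
  sInf {r | ∃ Y : ∀ j, Matrix (N j) (N j) ℝ, (∀ j, (Y j).PosDef) ∧ r = value p V Y}

/-- The datum `(V, p)` is feasible and its capacity is attained. -/
def IsExtremizable (p : J → ℝ) (V : QuiverDatum D N α) : Prop :=
  0 < capacity p V ∧
    ∃ Y : ∀ j, Matrix (N j) (N j) ℝ, (∀ j, (Y j).PosDef) ∧ value p V Y = capacity p V

lemma value_nonneg (hp : ∀ j, 0 < p j) (V : QuiverDatum D N α) {Y : ∀ j, Matrix (N j) (N j) ℝ}
    (hY : ∀ j, (Y j).PosDef) : 0 ≤ value p V Y :=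
  div_nonneg (Finset.prod_nonneg fun i _ =>
    (gram_posSemidef hp V (fun j => (hY j).posSemidef) i).det_nonneg) (prod_det_rpow_pos p hY).le

lemma capacity_le_value (hp : ∀ j, 0 < p j) (V : QuiverDatum D N α)
    {Y : ∀ j, Matrix (N j) (N j) ℝ} (hY : ∀ j, (Y j).PosDef) : capacity p V ≤ value p V Y := by
  refine csInf_le ⟨0, ?_⟩ ⟨Y, hY, rfl⟩
  rintro _ ⟨Y, hY, rfl⟩
  exact value_nonneg hp V hY

lemma le_capacity {V : QuiverDatum D N α} {c : ℝ}
    (h : ∀ Y : ∀ j, Matrix (N j) (N j) ℝ, (∀ j, (Y j).PosDef) → c ≤ value p V Y) :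
    c ≤ capacity p V := by
  refine le_csInf ⟨_, fun _ => 1, fun _ => PosDef.one, rfl⟩ ?_
  rintro _ ⟨Y, hY, rfl⟩
  exact h Y hY

lemma capacity_nonneg (hp : ∀ j, 0 < p j) (V : QuiverDatum D N α) : 0 ≤ capacity p V :=
  le_capacity fun _ hY => value_nonneg hp V hY

/-- The factor by which the change of coordinates `(P, Q)` multiplies the capacity. -/
noncomputable def volumeFactor (p : J → ℝ) (P : ∀ i, InvertibleMatrix (D i) (D' i))
    (Q : ∀ j, InvertibleMatrix (N j) (N' j)) : ℝ :=
  (∏ i, (P i).symm.detSq) * ∏ j, (Q j).detSq ^ p j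

lemma volumeFactor_pos (p : J → ℝ) (P : ∀ i, InvertibleMatrix (D i) (D' i))
    (Q : ∀ j, InvertibleMatrix (N j) (N' j)) : 0 < volumeFactor p P Q :=
  mul_pos (Finset.prod_pos fun i _ => (P i).symm.detSq_pos)
    (Finset.prod_pos fun j _ => Real.rpow_pos_of_pos (Q j).detSq_pos _)

lemma value_baseChange (P : ∀ i, InvertibleMatrix (D i) (D' i))
    (Q : ∀ j, InvertibleMatrix (N j) (N' j)) (V : QuiverDatum D N α)
    {Y : ∀ j, Matrix (N' j) (N' j) ℝ} (hY : ∀ j, (Y j).PosDef) :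
    value p (V.baseChange P Q) Y =
      volumeFactor p P Q * value p V fun j => (Q j).matᵀ * Y j * (Q j).mat := by
  have hnum : ∀ i, (gram p (V.baseChange P Q) Y i).det = (P i).symm.detSq *
      (gram p V (fun j => (Q j).matᵀ * Y j * (Q j).mat) i).det := fun i => by
    rw [gram_baseChange]
    exact (P i).symm.det_transpose_mul_mul _
  have hden : ∀ j, ((Q j).matᵀ * Y j * (Q j).mat).det ^ p j =
      (Q j).detSq ^ p j * (Y j).det ^ p j := fun j => by
    rw [InvertibleMatrix.det_transpose_mul_mul,
      Real.mul_rpow (Q j).detSq_pos.le (hY j).det_pos.le]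
  have hQ : ∏ j, (Q j).detSq ^ p j ≠ 0 :=
    (Finset.prod_pos fun j _ => Real.rpow_pos_of_pos (Q j).detSq_pos _).ne'
  simp only [value, volumeFactor, hnum, hden, Finset.prod_mul_distrib]
  field_simp

lemma value_baseChange_symm (P : ∀ i, InvertibleMatrix (D i) (D' i))
    (Q : ∀ j, InvertibleMatrix (N j) (N' j)) (V : QuiverDatum D N α)
    {Y : ∀ j, Matrix (N j) (N j) ℝ} (hY : ∀ j, (Y j).PosDef) :
    value p (V.baseChange P Q) (fun j => (Q j).invᵀ * Y j * (Q j).inv) =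
      volumeFactor p P Q * value p V Y := by
  have hY' : ∀ j, ((Q j).invᵀ * Y j * (Q j).inv).PosDef :=
    fun j => (Q j).symm.posDef_transpose_mul_mul (hY j)
  rw [value_baseChange P Q V hY']
  simp only [InvertibleMatrix.conj_conj_symm]

lemma capacity_baseChange (hp : ∀ j, 0 < p j) (P : ∀ i, InvertibleMatrix (D i) (D' i))
    (Q : ∀ j, InvertibleMatrix (N j) (N' j)) (V : QuiverDatum D N α) :
    capacity p (V.baseChange P Q) = volumeFactor p P Q * capacity p V := by
  have hpos := volumeFactor_pos p P Q
  apply le_antisymm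
  · rw [← div_le_iff₀' hpos]
    refine le_capacity fun Y hY => ?_
    rw [div_le_iff₀' hpos, ← value_baseChange_symm P Q V hY]
    exact capacity_le_value hp _ fun j => (Q j).symm.posDef_transpose_mul_mul (hY j)
  · refine le_capacity fun Y hY => ?_
    rw [value_baseChange P Q V hY]
    exact mul_le_mul_of_nonneg_left
      (capacity_le_value hp _ fun j => (Q j).posDef_transpose_mul_mul (hY j)) hpos.le

lemma capacity_baseChange_pos (hp : ∀ j, 0 < p j) (P : ∀ i, InvertibleMatrix (D i) (D' i))
    (Q : ∀ j, InvertibleMatrix (N j) (N' j)) {V : QuiverDatum D N α} :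
    0 < capacity p (V.baseChange P Q) ↔ 0 < capacity p V := by
  rw [capacity_baseChange hp, mul_pos_iff_of_pos_left (volumeFactor_pos p P Q)]

lemma IsExtremizable.baseChange (hp : ∀ j, 0 < p j) {V : QuiverDatum D N α}
    (hV : IsExtremizable p V) (P : ∀ i, InvertibleMatrix (D i) (D' i))
    (Q : ∀ j, InvertibleMatrix (N j) (N' j)) : IsExtremizable p (V.baseChange P Q) := by
  obtain ⟨hpos, Y, hY, hVY⟩ := hV
  refine ⟨(capacity_baseChange_pos hp P Q).2 hpos, fun j => (Q j).invᵀ * Y j * (Q j).inv,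
    fun j => (Q j).symm.posDef_transpose_mul_mul (hY j), ?_⟩
  rw [value_baseChange_symm P Q V hY, hVY, capacity_baseChange hp]

/-- The orthogonality condition on a dimension vector: the dimensions at the sources sum to the
`p`-weighted sum of the dimensions at the sinks. -/
def IsBalanced (p : J → ℝ) (δ : I → ℕ) (η : J → ℕ) : Prop :=
  ∑ i, (δ i : ℝ) = ∑ j, p j * η j

lemma volumeFactor_scalar (p : J → ℝ) {t : ℝ} (ht : 0 < t) :
    volumeFactor p (fun i => .scalar (D i) ht.ne') (fun j => .scalar (N j) ht.ne') =
      t ^ (2 * (∑ j, p j * Fintype.card (N j) - ∑ i, (Fintype.card (D i) : ℝ))) := by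
  have hsymm : ∀ i, (InvertibleMatrix.scalar (D i) ht.ne').symm =
      .scalar (D i) (inv_ne_zero ht.ne') := fun i => by
    simp [InvertibleMatrix.symm, InvertibleMatrix.scalar]
  have hsource : ∀ i, (InvertibleMatrix.scalar (D i) ht.ne').symm.detSq =
      t ^ (-(2 * Fintype.card (D i) : ℝ)) := fun i => by
    rw [hsymm, InvertibleMatrix.detSq_scalar, inv_pow, Real.rpow_neg ht.le]
    norm_cast
  have hsink : ∀ j, (InvertibleMatrix.scalar (N j) ht.ne').detSq ^ p j =
      t ^ (2 * (p j * Fintype.card (N j))) := fun j => by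
    rw [InvertibleMatrix.detSq_scalar, ← Real.rpow_natCast, ← Real.rpow_mul ht.le]
    push_cast
    ring_nf
  simp only [volumeFactor, hsource, hsink]
  rw [← Real.rpow_sum_of_pos ht, ← Real.rpow_sum_of_pos ht, ← Real.rpow_add ht,
    Finset.sum_neg_distrib, ← Finset.mul_sum, ← Finset.mul_sum]
  ring_nf

lemma isBalanced_of_capacity_pos (hp : ∀ j, 0 < p j) {V : QuiverDatum D N α}
    (hV : 0 < capacity p V) :
    IsBalanced p (fun i => Fintype.card (D i)) fun j => Fintype.card (N j) := by
  have h := capacity_baseChange hp (fun i => .scalar (D i) two_ne_zero)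
    (fun j => .scalar (N j) two_ne_zero) V
  rw [baseChange_scalar, volumeFactor_scalar p two_pos, eq_comm, mul_eq_right₀ hV.ne',
    ← Real.rpow_zero 2, Real.rpow_right_inj two_pos (by norm_num)] at h
  unfold IsBalanced
  linarith

lemma value_smul {V : QuiverDatum D N α}
    (hbal : IsBalanced p (fun i => Fintype.card (D i)) fun j => Fintype.card (N j))
    {c : ℝ} (hc : 0 < c) {Y : ∀ j, Matrix (N j) (N j) ℝ} (hY : ∀ j, (Y j).PosDef) :
    value p V (fun j => c • Y j) = value p V Y := by
  have hsqrt := Real.sqrt_pos.2 hc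
  have hscale : ∀ j, (InvertibleMatrix.scalar (N j) hsqrt.ne').matᵀ * Y j *
      (InvertibleMatrix.scalar (N j) hsqrt.ne').mat = c • Y j := fun j => by
    simp [smul_smul, hc.le]
  have h := value_baseChange (fun i => .scalar (D i) hsqrt.ne')
    (fun j => .scalar (N j) hsqrt.ne') V hY (p := p)
  rw [baseChange_scalar, volumeFactor_scalar p hsqrt, ← hbal, sub_self, mul_zero, Real.rpow_zero,
    one_mul] at h
  simp only [h, hscale]

end QuiverDatum

/-! ### Block triangular data -/

namespace QuiverDatum

variable {I J : Type*} {D₁ D₂ : I → Type*} {N₁ N₂ : J → Type*} {α : I → J → Type*}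

/-- The datum whose matrices are block upper triangular with diagonal blocks `V₁`, `V₂` and upper
right block `X`. The sinks of the first block span a subrepresentation. -/
def blockTriangular (V₁ : QuiverDatum D₁ N₁ α) (X : QuiverDatum D₂ N₁ α)
    (V₂ : QuiverDatum D₂ N₂ α) : QuiverDatum (fun i => D₁ i ⊕ D₂ i) (fun j => N₁ j ⊕ N₂ j) α :=
  fun i j a => fromBlocks (V₁ i j a) (X i j a) 0 (V₂ i j a)

variable [∀ j, Fintype (N₁ j)] [∀ j, Fintype (N₂ j)]

section BaseChange

variable [∀ i, Fintype (D₁ i)] [∀ i, Fintype (D₂ i)] [∀ i, DecidableEq (D₁ i)]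
  [∀ i, DecidableEq (D₂ i)] [∀ j, DecidableEq (N₁ j)] [∀ j, DecidableEq (N₂ j)]
  {V₁ : QuiverDatum D₁ N₁ α} {X : QuiverDatum D₂ N₁ α}
  {V₂ : QuiverDatum D₂ N₂ α}

lemma baseChange_unitriangular_blockTriangular (Z : ∀ j, Matrix (N₁ j) (N₂ j) ℝ) :
    (blockTriangular V₁ X V₂).baseChange (fun _ => .refl _) (fun j => .unitriangular (Z j)) =
      blockTriangular V₁ (fun i j a => X i j a + Z j * V₂ i j a) V₂ := by
  funext i j a
  simp [baseChange, blockTriangular, fromBlocks_multiply]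

lemma baseChange_scalar_blockTriangular {t : ℝ} (ht : t ≠ 0) :
    (blockTriangular V₁ X V₂).baseChange (fun i => (.sum (.refl (D₁ i)) (.scalar (D₂ i) ht)))
      (fun j => .sum (.refl (N₁ j)) (.scalar (N₂ j) ht)) = blockTriangular V₁ (t⁻¹ • X) V₂ := by
  funext i j a
  simp [baseChange, blockTriangular, fromBlocks_multiply, smul_smul, ht]

lemma baseChange_sum_blockTriangular {D₁' D₂' : I → Type*} {N₁' N₂' : J → Type*}
    [∀ i, Fintype (D₁' i)] [∀ i, Fintype (D₂' i)] [∀ j, Fintype (N₁' j)] [∀ j, Fintype (N₂' j)]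
    [∀ i, DecidableEq (D₁' i)] [∀ i, DecidableEq (D₂' i)] [∀ j, DecidableEq (N₁' j)]
    [∀ j, DecidableEq (N₂' j)] (P₁ : ∀ i, InvertibleMatrix (D₁ i) (D₁' i))
    (P₂ : ∀ i, InvertibleMatrix (D₂ i) (D₂' i)) (Q₁ : ∀ j, InvertibleMatrix (N₁ j) (N₁' j))
    (Q₂ : ∀ j, InvertibleMatrix (N₂ j) (N₂' j)) :
    (blockTriangular V₁ X V₂).baseChange (fun i => (P₁ i).sum (P₂ i))
        (fun j => (Q₁ j).sum (Q₂ j)) =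
      blockTriangular (V₁.baseChange P₁ Q₁) (X.baseChange P₂ Q₁) (V₂.baseChange P₂ Q₂) := by
  funext i j a
  simp [baseChange, blockTriangular, fromBlocks_multiply]

end BaseChange

variable [Fintype J] [∀ i j, Fintype (α i j)]

/-- The Gram matrix at the source `i` of the columns of `V` against those of `X`. -/
def crossGram (p : J → ℝ) (V : QuiverDatum D₁ N₁ α) (X : QuiverDatum D₂ N₁ α)
    (Y : ∀ j, Matrix (N₁ j) (N₁ j) ℝ) (i : I) : Matrix (D₁ i) (D₂ i) ℝ :=
  ∑ j, p j • ∑ a, (V i j a)ᵀ * Y j * X i j a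

variable {p : J → ℝ} {V₁ : QuiverDatum D₁ N₁ α} {X : QuiverDatum D₂ N₁ α}
  {V₂ : QuiverDatum D₂ N₂ α} {Y₁ : ∀ j, Matrix (N₁ j) (N₁ j) ℝ} {Y₂ : ∀ j, Matrix (N₂ j) (N₂ j) ℝ}

lemma gram_fromCols (hY₁ : ∀ j, (Y₁ j).IsHermitian) (i : I) :
    gram p (fun i j a => fromCols (V₁ i j a) (X i j a)) Y₁ i =
      fromBlocks (gram p V₁ Y₁ i) (crossGram p V₁ X Y₁ i) (crossGram p V₁ X Y₁ i)ᵀ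
        (gram p X Y₁ i) := by
  have hY : ∀ j, (Y₁ j)ᵀ = Y₁ j := fun j => (hY₁ j).eq
  have hcross : (crossGram p V₁ X Y₁ i)ᵀ = crossGram p X V₁ Y₁ i := by
    simp [crossGram, transpose_sum, transpose_smul, transpose_mul, hY, Matrix.mul_assoc]
  rw [hcross]
  ext (x | x) (y | y) <;> simp [gram, crossGram, Matrix.sum_apply, transpose_fromCols]

lemma gram_blockTriangular (hY₁ : ∀ j, (Y₁ j).IsHermitian) (i : I) :
    gram p (blockTriangular V₁ X V₂) (fun j => fromBlocks (Y₁ j) 0 0 (Y₂ j)) i =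
      fromBlocks (gram p V₁ Y₁ i) (crossGram p V₁ X Y₁ i) (crossGram p V₁ X Y₁ i)ᵀ
        (gram p X Y₁ i + gram p V₂ Y₂ i) := by
  have hsplit : gram p (blockTriangular V₁ X V₂) (fun j => fromBlocks (Y₁ j) 0 0 (Y₂ j)) i =
      gram p (fun i j a => fromCols (V₁ i j a) (X i j a)) Y₁ i +
        fromBlocks 0 0 0 (gram p V₂ Y₂ i) := by
    ext (x | x) (y | y) <;>
      simp [gram, blockTriangular, Matrix.sum_apply, fromBlocks_multiply, fromBlocks_transpose,
        transpose_fromCols, mul_add, Finset.sum_add_distrib]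
  rw [hsplit, gram_fromCols hY₁, fromBlocks_add, add_zero, add_zero, add_zero]

variable [∀ i, Fintype (D₁ i)] [∀ i, Fintype (D₂ i)] [∀ i, DecidableEq (D₁ i)]
  [∀ i, DecidableEq (D₂ i)]

lemma det_gram_mul_det_gram_le (hp : ∀ j, 0 < p j) (hY₁ : ∀ j, (Y₁ j).PosDef)
    (hY₂ : ∀ j, (Y₂ j).PosDef) (i : I) :
    (gram p V₁ Y₁ i).det * (gram p V₂ Y₂ i).det ≤
      (gram p (blockTriangular V₁ X V₂) (fun j => fromBlocks (Y₁ j) 0 0 (Y₂ j)) i).det := by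
  have hherm := fun j => (hY₁ j).isHermitian
  rw [gram_blockTriangular hherm]
  refine det_mul_det_le_det_fromBlocks ?_ (gram_posSemidef hp V₂ (fun j => (hY₂ j).posSemidef) i)
  rw [← gram_fromCols hherm]
  exact gram_posSemidef hp _ (fun j => (hY₁ j).posSemidef) i

variable [∀ j, DecidableEq (N₁ j)] [∀ j, DecidableEq (N₂ j)]

lemma prod_det_fromBlocks_rpow (hY₁ : ∀ j, (Y₁ j).PosDef) (hY₂ : ∀ j, (Y₂ j).PosDef) :
    ∏ j, (fromBlocks (Y₁ j) 0 0 (Y₂ j)).det ^ p j =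
      (∏ j, (Y₁ j).det ^ p j) * ∏ j, (Y₂ j).det ^ p j := by
  rw [← Finset.prod_mul_distrib]
  refine Finset.prod_congr rfl fun j _ => ?_
  rw [det_fromBlocks_zero₂₁, Real.mul_rpow (hY₁ j).det_pos.le (hY₂ j).det_pos.le]

variable [Fintype I]

lemma value_mul_value_le (hp : ∀ j, 0 < p j) (hY₁ : ∀ j, (Y₁ j).PosDef)
    (hY₂ : ∀ j, (Y₂ j).PosDef) :
    value p V₁ Y₁ * value p V₂ Y₂ ≤
      value p (blockTriangular V₁ X V₂) fun j => fromBlocks (Y₁ j) 0 0 (Y₂ j) := by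
  rw [value, value, value, div_mul_div_comm, ← Finset.prod_mul_distrib,
    prod_det_fromBlocks_rpow hY₁ hY₂]
  refine div_le_div_of_nonneg_right (Finset.prod_le_prod (fun i _ => ?_) fun i _ =>
    det_gram_mul_det_gram_le hp hY₁ hY₂ i)
    (mul_pos (prod_det_rpow_pos p hY₁) (prod_det_rpow_pos p hY₂)).le
  exact mul_nonneg (gram_posSemidef hp V₁ (fun j => (hY₁ j).posSemidef) i).det_nonneg
    (gram_posSemidef hp V₂ (fun j => (hY₂ j).posSemidef) i).det_nonneg

lemma value_blockTriangular_zero (hY₁ : ∀ j, (Y₁ j).PosDef) (hY₂ : ∀ j, (Y₂ j).PosDef) :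
    value p (blockTriangular V₁ 0 V₂) (fun j => fromBlocks (Y₁ j) 0 0 (Y₂ j)) =
      value p V₁ Y₁ * value p V₂ Y₂ := by
  have hgram : ∀ i, (gram p (blockTriangular V₁ 0 V₂)
      (fun j => fromBlocks (Y₁ j) 0 0 (Y₂ j)) i).det =
      (gram p V₁ Y₁ i).det * (gram p V₂ Y₂ i).det := fun i => by
    rw [gram_blockTriangular fun j => (hY₁ j).isHermitian]
    simp [gram, crossGram]
  simp only [value, hgram, prod_det_fromBlocks_rpow hY₁ hY₂, Finset.prod_mul_distrib]
  rw [div_mul_div_comm]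

lemma volumeFactor_unitriangular (p : J → ℝ) (Z : ∀ j, Matrix (N₁ j) (N₂ j) ℝ) :
    volumeFactor p (fun i => .refl (D₁ i)) (fun j => .unitriangular (Z j)) = 1 := by
  simp [volumeFactor, InvertibleMatrix.detSq]

lemma capacity_mul_capacity_le (hp : ∀ j, 0 < p j) (V₁ : QuiverDatum D₁ N₁ α)
    (X : QuiverDatum D₂ N₁ α) (V₂ : QuiverDatum D₂ N₂ α) :
    capacity p V₁ * capacity p V₂ ≤ capacity p (blockTriangular V₁ X V₂) := by
  refine le_capacity fun Y hY => ?_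
  choose Y₁ Y₂ Z hY₁ hY₂ hYZ using fun j => exists_block_ldl (hY j)
  have hvalue := value_baseChange (p := p) (fun i => .refl (D₁ i ⊕ D₂ i))
    (fun j => .unitriangular (Z j)) (blockTriangular V₁ X V₂)
    fun j => posDef_fromBlocks_zero (hY₁ j) (hY₂ j)
  simp only [baseChange_unitriangular_blockTriangular, volumeFactor_unitriangular, one_mul,
    InvertibleMatrix.unitriangular_mat, ← hYZ] at hvalue
  rw [← hvalue]
  exact (mul_le_mul (capacity_le_value hp _ hY₁) (capacity_le_value hp _ hY₂)
    (capacity_nonneg hp _) (value_nonneg hp _ hY₁)).trans (value_mul_value_le hp hY₁ hY₂)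

end QuiverDatum

namespace QuiverDatum

variable {I J : Type*} {D₁ D₂ : I → Type*} {N₁ N₂ : J → Type*} {α : I → J → Type*}
  [Fintype I] [Fintype J] [∀ i j, Fintype (α i j)]
  [∀ i, Fintype (D₁ i)] [∀ i, Fintype (D₂ i)] [∀ j, Fintype (N₁ j)] [∀ j, Fintype (N₂ j)]
  [∀ i, DecidableEq (D₁ i)] [∀ i, DecidableEq (D₂ i)] [∀ j, DecidableEq (N₁ j)]
  [∀ j, DecidableEq (N₂ j)]

lemma volumeFactor_refl (p : J → ℝ) :
    volumeFactor p (fun i => .refl (D₁ i)) (fun j => .refl (N₁ j)) = 1 := by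
  simp [volumeFactor, InvertibleMatrix.detSq]

lemma volumeFactor_sum (p : J → ℝ) {D₁' D₂' : I → Type*} {N₁' N₂' : J → Type*}
    [∀ i, Fintype (D₁' i)] [∀ i, Fintype (D₂' i)] [∀ j, Fintype (N₁' j)] [∀ j, Fintype (N₂' j)]
    [∀ i, DecidableEq (D₁' i)] [∀ i, DecidableEq (D₂' i)] [∀ j, DecidableEq (N₁' j)]
    [∀ j, DecidableEq (N₂' j)] (P₁ : ∀ i, InvertibleMatrix (D₁ i) (D₁' i))
    (P₂ : ∀ i, InvertibleMatrix (D₂ i) (D₂' i)) (Q₁ : ∀ j, InvertibleMatrix (N₁ j) (N₁' j))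
    (Q₂ : ∀ j, InvertibleMatrix (N₂ j) (N₂' j)) :
    volumeFactor p (fun i => (P₁ i).sum (P₂ i)) (fun j => (Q₁ j).sum (Q₂ j)) =
      volumeFactor p P₁ Q₁ * volumeFactor p P₂ Q₂ := by
  have hsource : ∀ i, ((P₁ i).sum (P₂ i)).symm.detSq = (P₁ i).symm.detSq * (P₂ i).symm.detSq :=
    fun i => (P₁ i).symm.detSq_sum (P₂ i).symm
  have hsink : ∀ j, ((Q₁ j).sum (Q₂ j)).detSq ^ p j = (Q₁ j).detSq ^ p j * (Q₂ j).detSq ^ p j :=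
    fun j => by
      rw [InvertibleMatrix.detSq_sum,
        Real.mul_rpow (Q₁ j).detSq_pos.le (Q₂ j).detSq_pos.le]
  simp only [volumeFactor, hsource, hsink, Finset.prod_mul_distrib]
  ring

variable {p : J → ℝ} {V₁ : QuiverDatum D₁ N₁ α} {X : QuiverDatum D₂ N₁ α}
  {V₂ : QuiverDatum D₂ N₂ α}

lemma capacity_blockTriangular_smul (hp : ∀ j, 0 < p j) {ε : ℝ} (hε : 0 < ε) :
    capacity p (blockTriangular V₁ X V₂) =
      ε ^ (2 * (∑ j, p j * Fintype.card (N₂ j) - ∑ i, (Fintype.card (D₂ i) : ℝ))) *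
        capacity p (blockTriangular V₁ (ε • X) V₂) := by
  have h := capacity_baseChange hp (fun i => .sum (.refl (D₁ i)) (.scalar (D₂ i) hε.ne'))
    (fun j => .sum (.refl (N₁ j)) (.scalar (N₂ j) hε.ne')) (blockTriangular V₁ (ε • X) V₂)
  rwa [baseChange_scalar_blockTriangular, inv_smul_smul₀ hε.ne', volumeFactor_sum,
    volumeFactor_refl, one_mul, volumeFactor_scalar p hε] at h

lemma tendsto_value_blockTriangular_smul {Y₁ : ∀ j, Matrix (N₁ j) (N₁ j) ℝ}
    {Y₂ : ∀ j, Matrix (N₂ j) (N₂ j) ℝ} (hY₁ : ∀ j, (Y₁ j).PosDef) (hY₂ : ∀ j, (Y₂ j).PosDef) :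
    Filter.Tendsto (fun ε : ℝ => value p (blockTriangular V₁ (ε • X) V₂)
      fun j => fromBlocks (Y₁ j) 0 0 (Y₂ j)) (nhdsWithin 0 (Set.Ioi 0))
      (nhds (value p V₁ Y₁ * value p V₂ Y₂)) := by
  have hcont : Continuous fun ε : ℝ => value p (blockTriangular V₁ (ε • X) V₂)
      fun j => fromBlocks (Y₁ j) 0 0 (Y₂ j) := by
    refine continuous_value (fun i j a => ?_) (fun j => continuous_const)
      fun _ j => posDef_fromBlocks_zero (hY₁ j) (hY₂ j)
    exact continuous_const.matrix_fromBlocks (continuous_id.smul continuous_const)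
      continuous_const continuous_const
  have h := hcont.tendsto 0
  rw [zero_smul, value_blockTriangular_zero hY₁ hY₂] at h
  exact h.mono_left nhdsWithin_le_nhds

lemma capacity_le_rpow_mul_value (hp : ∀ j, 0 < p j) {Y₁ : ∀ j, Matrix (N₁ j) (N₁ j) ℝ}
    {Y₂ : ∀ j, Matrix (N₂ j) (N₂ j) ℝ} (hY₁ : ∀ j, (Y₁ j).PosDef) (hY₂ : ∀ j, (Y₂ j).PosDef)
    {ε : ℝ} (hε : 0 < ε) :
    capacity p (blockTriangular V₁ X V₂) ≤
      ε ^ (2 * (∑ j, p j * Fintype.card (N₂ j) - ∑ i, (Fintype.card (D₂ i) : ℝ))) *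
        value p (blockTriangular V₁ (ε • X) V₂) fun j => fromBlocks (Y₁ j) 0 0 (Y₂ j) := by
  rw [capacity_blockTriangular_smul hp hε]
  exact mul_le_mul_of_nonneg_left
    (capacity_le_value hp _ fun j => posDef_fromBlocks_zero (hY₁ j) (hY₂ j))
    (Real.rpow_nonneg hε.le _)

lemma sum_mul_card_le_sum_card_of_capacity_pos (hp : ∀ j, 0 < p j)
    (h : 0 < capacity p (blockTriangular V₁ X V₂)) :
    ∑ j, p j * Fintype.card (N₂ j) ≤ ∑ i, (Fintype.card (D₂ i) : ℝ) := by
  by_contra! hlt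
  have hexp : 0 < 2 * (∑ j, p j * Fintype.card (N₂ j) - ∑ i, (Fintype.card (D₂ i) : ℝ)) := by
    linarith
  have hrpow : Filter.Tendsto (fun ε : ℝ => ε ^ (2 * (∑ j, p j * Fintype.card (N₂ j) -
      ∑ i, (Fintype.card (D₂ i) : ℝ)))) (nhdsWithin 0 (Set.Ioi 0)) (nhds 0) := by
    have h := (Real.continuousAt_rpow_const 0 _ (.inr hexp.le)).tendsto
    rw [Real.zero_rpow hexp.ne'] at h
    exact h.mono_left nhdsWithin_le_nhds
  have hlim := hrpow.mul (tendsto_value_blockTriangular_smul (p := p) (V₁ := V₁) (X := X)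
    (V₂ := V₂) (fun _ => PosDef.one) (fun _ => PosDef.one))
  rw [zero_mul] at hlim
  exact h.not_ge <| ge_of_tendsto hlim <| Filter.eventually_of_mem self_mem_nhdsWithin
    fun ε hε => capacity_le_rpow_mul_value hp (fun _ => PosDef.one) (fun _ => PosDef.one) hε

lemma le_mul_capacity {c r : ℝ} (hr : 0 ≤ r)
    (h : ∀ Y : ∀ j, Matrix (N₁ j) (N₁ j) ℝ, (∀ j, (Y j).PosDef) → c ≤ r * value p V₁ Y) :
    c ≤ r * capacity p V₁ := by
  rcases hr.eq_or_lt with rfl | hr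
  · simpa using h (fun _ => 1) fun _ => PosDef.one
  · rw [← div_le_iff₀' hr]
    exact le_capacity fun Y hY => (div_le_iff₀' hr).2 (h Y hY)

lemma capacity_blockTriangular (hp : ∀ j, 0 < p j)
    (hbal : IsBalanced p (fun i => Fintype.card (D₂ i)) fun j => Fintype.card (N₂ j)) :
    capacity p (blockTriangular V₁ X V₂) = capacity p V₁ * capacity p V₂ := by
  refine le_antisymm ?_ (capacity_mul_capacity_le hp V₁ X V₂)
  rw [mul_comm]
  refine le_mul_capacity (capacity_nonneg hp V₂) fun Y₁ hY₁ => ?_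
  rw [mul_comm]
  refine le_mul_capacity (value_nonneg hp V₁ hY₁) fun Y₂ hY₂ => ?_
  refine ge_of_tendsto (tendsto_value_blockTriangular_smul (X := X) hY₁ hY₂) <|
    Filter.eventually_of_mem self_mem_nhdsWithin fun ε hε => ?_
  have h := capacity_le_rpow_mul_value (V₁ := V₁) (X := X) (V₂ := V₂) hp hY₁ hY₂ hε
  rwa [← hbal, sub_self, mul_zero, Real.rpow_zero, one_mul] at h

lemma IsExtremizable.blockTriangular_zero (hp : ∀ j, 0 < p j) (h₁ : IsExtremizable p V₁)
    (h₂ : IsExtremizable p V₂) : IsExtremizable p (blockTriangular V₁ 0 V₂) := by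
  have hcap := capacity_blockTriangular (V₁ := V₁) (X := 0) (V₂ := V₂) hp
    (isBalanced_of_capacity_pos hp h₂.1)
  obtain ⟨hpos₁, Y₁, hY₁, hV₁⟩ := h₁
  obtain ⟨hpos₂, Y₂, hY₂, hV₂⟩ := h₂
  refine ⟨hcap ▸ mul_pos hpos₁ hpos₂, fun j => fromBlocks (Y₁ j) 0 0 (Y₂ j),
    fun j => posDef_fromBlocks_zero (hY₁ j) (hY₂ j), ?_⟩
  rw [value_blockTriangular_zero hY₁ hY₂, hV₁, hV₂, hcap]

end QuiverDatum

/-! ### Semistability -/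

lemma exists_adapted_coordinates {ι : Type*} [Fintype ι] [DecidableEq ι]
    (U : Submodule ℝ (ι → ℝ)) :
    ∃ P : InvertibleMatrix ι (Fin (Module.finrank ℝ U) ⊕ Fin (Module.finrank ℝ ((ι → ℝ) ⧸ U))),
      (∀ c, P.inv.col (Sum.inl c) ∈ U) ∧ ∀ y ∈ U, ∀ r, (P.mat *ᵥ y) (Sum.inr r) = 0 := by
  let b := Module.Basis.sumQuot (Module.finBasis ℝ U) (Module.finBasis ℝ ((ι → ℝ) ⧸ U))
  let e := Pi.basisFun ℝ ι
  refine ⟨⟨b.toMatrix e, e.toMatrix b, b.toMatrix_mul_toMatrix_flip e,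
    e.toMatrix_mul_toMatrix_flip b⟩, fun c => ?_, fun y hy r => ?_⟩
  · have hcol : (e.toMatrix b).col (Sum.inl c) = Module.finBasis ℝ U c := by
      funext x
      simp [Module.Basis.toMatrix_apply, b, e]
    exact hcol ▸ Submodule.coe_mem _
  · have hrepr : b.toMatrix e *ᵥ y = b.repr y := by
      have hy' : ⇑(e.repr y) = y := by
        funext x
        simp [e]
      exact hy' ▸ e.toMatrix_mulVec_repr b y
    exact (congrFun hrepr _).trans (Module.Basis.sumQuot_repr_inr_of_mem _ _ _ hy _)

namespace QuiverDatum

variable {I J : Type*} {D : I → Type*} {N : J → Type*} {α : I → J → Type*}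

/-- The row of the matrix of `V` on the arrow `g.2` at the coordinate `g.1` of a sink. All rows of
matrices starting at the source `i` are indexed by the same sigma type. -/
def row (V : QuiverDatum D N α) (i : I) (g : Σ s : Σ j, N j, α i s.1) : D i → ℝ :=
  V i g.1.1 g.2 g.1.2

/-- The rank at the source `i` of the rows lying over a set `T` of sink coordinates. -/
noncomputable def rowRank (V : QuiverDatum D N α) (T : Finset (Σ j, N j)) (i : I) : ℕ :=
  Module.finrank ℝ (Submodule.span ℝ (V.row i '' {g | g.1 ∈ T}))

lemma rowRank_empty (V : QuiverDatum D N α) (i : I) : V.rowRank ∅ i = 0 := by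
  have hrows : {g : Σ s : Σ j, N j, α i s.1 | g.1 ∈ (∅ : Finset (Σ j, N j))} = ∅ := by
    ext
    simp
  rw [rowRank, hrows, Set.image_empty, Submodule.span_empty, finrank_bot]

/-- The amount by which the coordinate quotient of `V` determined by `T`, whose dimensions are the
row ranks at the sources and the numbers of elements of `T` at the sinks, satisfies the
semistability inequality. -/
noncomputable def slopeDefect [Fintype I] (p : J → ℝ) (V : QuiverDatum D N α)
    (T : Finset (Σ j, N j)) : ℝ :=
  ∑ i, (V.rowRank T i : ℝ) - ∑ s ∈ T, p s.1

lemma slopeDefect_empty [Fintype I] (p : J → ℝ) (V : QuiverDatum D N α) :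
    slopeDefect p V ∅ = 0 := by
  simp [slopeDefect, rowRank_empty]

/-- The subspace at the sink `j` where the coordinates belonging to `T` vanish. -/
def coordinateSubspace (T : Finset (Σ j, N j)) (j : J) : Submodule ℝ (N j → ℝ) :=
  LinearMap.ker (LinearMap.funLeft ℝ ℝ (Subtype.val : {r : N j // ⟨j, r⟩ ∈ T} → N j))

section CoordinateSubspace

variable [Fintype J]

lemma sum_mul_finrank_quotient_coordinateSubspace [∀ j, Finite (N j)] (p : J → ℝ)
    (T : Finset (Σ j, N j)) :
    ∑ j, p j * Module.finrank ℝ ((N j → ℝ) ⧸ coordinateSubspace T j) = ∑ s ∈ T, p s.1 := by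
  classical
  have := fun j => Fintype.ofFinite (N j)
  have hrank : ∀ j, Module.finrank ℝ ((N j → ℝ) ⧸ coordinateSubspace T j) =
      (Finset.univ.filter fun r : N j => (⟨j, r⟩ : Σ j, N j) ∈ T).card := fun j => by
    rw [coordinateSubspace, (LinearMap.quotKerEquivOfSurjective _
        (LinearMap.funLeft_surjective_of_injective ℝ ℝ _ Subtype.val_injective)).finrank_eq,
      Module.finrank_fintype_fun_eq_card, Fintype.card_subtype]
  have hT : T = Finset.univ.sigma fun j =>
      Finset.univ.filter fun r : N j => (⟨j, r⟩ : Σ j, N j) ∈ T := by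
    ext ⟨j, r⟩
    simp
  conv_rhs => rw [hT, Finset.sum_sigma]
  simp [hrank, mul_comm]

lemma sum_finrank_quotient_coordinateSubspace [∀ j, Finite (N j)] (T : Finset (Σ j, N j)) :
    ∑ j, Module.finrank ℝ ((N j → ℝ) ⧸ coordinateSubspace T j) = T.card := by
  have h := sum_mul_finrank_quotient_coordinateSubspace (fun _ => 1) T
  simp only [one_mul, Finset.sum_const, nsmul_eq_mul, mul_one] at h
  exact_mod_cast h

lemma sum_finrank_coordinateSubspace_add_card [∀ j, Fintype (N j)] (T : Finset (Σ j, N j)) :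
    ∑ j, Module.finrank ℝ (coordinateSubspace T j) + T.card = Fintype.card (Σ j, N j) := by
  rw [← sum_finrank_quotient_coordinateSubspace, ← Finset.sum_add_distrib, Fintype.card_sigma]
  refine Finset.sum_congr rfl fun j _ => ?_
  rw [add_comm, Submodule.finrank_quotient_add_finrank, Module.finrank_fintype_fun_eq_card]

end CoordinateSubspace

variable [∀ i, Fintype (D i)]

/-- `U` and `W` are subspaces at the sources and sinks that are respected by `V`. -/
def IsSubrepresentation (V : QuiverDatum D N α) (U : ∀ i, Submodule ℝ (D i → ℝ))
    (W : ∀ j, Submodule ℝ (N j → ℝ)) : Prop :=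
  ∀ i j a, ∀ x ∈ U i, V i j a *ᵥ x ∈ W j

section BlockForm

variable [∀ j, Fintype (N j)] [∀ i, DecidableEq (D i)] [∀ j, DecidableEq (N j)]
  {V : QuiverDatum D N α} {U : ∀ i, Submodule ℝ (D i → ℝ)} {W : ∀ j, Submodule ℝ (N j → ℝ)}

lemma IsSubrepresentation.exists_baseChange_eq_blockTriangular (h : V.IsSubrepresentation U W) :
    ∃ (P : ∀ i, InvertibleMatrix (D i)
        (Fin (Module.finrank ℝ (U i)) ⊕ Fin (Module.finrank ℝ ((D i → ℝ) ⧸ U i))))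
      (Q : ∀ j, InvertibleMatrix (N j)
        (Fin (Module.finrank ℝ (W j)) ⊕ Fin (Module.finrank ℝ ((N j → ℝ) ⧸ W j)))),
      ∃ V₁ X V₂, V.baseChange P Q = blockTriangular V₁ X V₂ := by
  choose P hP _ using fun i => exists_adapted_coordinates (U i)
  choose Q _ hQ using fun j => exists_adapted_coordinates (W j)
  refine ⟨P, Q, fun i j a => (V.baseChange P Q i j a).toBlocks₁₁,
    fun i j a => (V.baseChange P Q i j a).toBlocks₁₂,
    fun i j a => (V.baseChange P Q i j a).toBlocks₂₂, ?_⟩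
  funext i j a
  have hzero : (V.baseChange P Q i j a).toBlocks₂₁ = 0 := by
    ext r c
    have hrc := hQ j _ (h i j a _ (hP i c)) r
    rw [mulVec_mulVec] at hrc
    exact hrc
  rw [blockTriangular, ← hzero, fromBlocks_toBlocks]

lemma IsSubrepresentation.sum_mul_finrank_quotient_le [Fintype I] [Fintype J]
    [∀ i j, Fintype (α i j)] {p : J → ℝ} (hp : ∀ j, 0 < p j) (hV : 0 < capacity p V)
    (h : V.IsSubrepresentation U W) :
    ∑ j, p j * Module.finrank ℝ ((N j → ℝ) ⧸ W j) ≤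
      ∑ i, (Module.finrank ℝ ((D i → ℝ) ⧸ U i) : ℝ) := by
  obtain ⟨P, Q, V₁, X, V₂, hblock⟩ := h.exists_baseChange_eq_blockTriangular
  rw [← capacity_baseChange_pos hp P Q, hblock] at hV
  simpa using sum_mul_card_le_sum_card_of_capacity_pos hp hV

end BlockForm

lemma rowRank_le_card (V : QuiverDatum D N α) (T : Finset (Σ j, N j)) (i : I) :
    V.rowRank T i ≤ Fintype.card (D i) := by
  have h := Submodule.finrank_le (Submodule.span ℝ (V.row i '' {g | g.1 ∈ T}))
  rwa [Module.finrank_fintype_fun_eq_card] at h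

/-- The subspace at the source `i` annihilated by all rows lying over `T`. -/
def annihilator (V : QuiverDatum D N α) (T : Finset (Σ j, N j)) (i : I) :
    Submodule ℝ (D i → ℝ) :=
  LinearMap.ker (Matrix.of fun g : {g : Σ s : Σ j, N j, α i s.1 // g.1 ∈ T} =>
    V.row i g).mulVecLin

lemma finrank_quotient_annihilator [Finite J] [∀ j, Finite (N j)] [∀ i j, Finite (α i j)]
    (V : QuiverDatum D N α) (T : Finset (Σ j, N j)) (i : I) :
    Module.finrank ℝ ((D i → ℝ) ⧸ V.annihilator T i) = V.rowRank T i := by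
  have hrows : Set.range (Matrix.of fun g : {g : Σ s : Σ j, N j, α i s.1 // g.1 ∈ T} =>
      V.row i g).row = V.row i '' {g | g.1 ∈ T} := by
    rw [Set.image_eq_range]
    rfl
  have := Fintype.ofFinite {g : Σ s : Σ j, N j, α i s.1 // g.1 ∈ T}
  rw [annihilator, (LinearMap.quotKerEquivRange _).finrank_eq, rowRank, ← hrows]
  exact rank_eq_finrank_span_row _

lemma isSubrepresentation_annihilator (V : QuiverDatum D N α) (T : Finset (Σ j, N j)) :
    V.IsSubrepresentation (V.annihilator T) (coordinateSubspace T) := by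
  intro i j a x hx
  refine LinearMap.mem_ker.2 (funext fun r => ?_)
  exact congrFun (LinearMap.mem_ker.1 hx) ⟨⟨⟨j, r⟩, a⟩, r.2⟩

variable [Fintype I] [Fintype J]

lemma slopeDefect_eq [∀ j, Finite (N j)] [∀ i j, Finite (α i j)] (p : J → ℝ)
    (V : QuiverDatum D N α) (T : Finset (Σ j, N j)) :
    slopeDefect p V T = ∑ i, (Module.finrank ℝ ((D i → ℝ) ⧸ V.annihilator T i) : ℝ) -
      ∑ j, p j * Module.finrank ℝ ((N j → ℝ) ⧸ coordinateSubspace T j) := by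
  simp only [finrank_quotient_annihilator, sum_mul_finrank_quotient_coordinateSubspace,
    slopeDefect]

variable [∀ j, Fintype (N j)] [∀ i j, Fintype (α i j)] [∀ i, DecidableEq (D i)]
  [∀ j, DecidableEq (N j)] {p : J → ℝ} {V : QuiverDatum D N α}

lemma slopeDefect_nonneg (hp : ∀ j, 0 < p j) (hV : 0 < capacity p V) (T : Finset (Σ j, N j)) :
    0 ≤ slopeDefect p V T := by
  rw [slopeDefect_eq, sub_nonneg]
  exact (V.isSubrepresentation_annihilator T).sum_mul_finrank_quotient_le hp hV

lemma sum_weight_univ (hp : ∀ j, 0 < p j) (hV : 0 < capacity p V) :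
    ∑ s : Σ j, N j, p s.1 = ∑ i, (Fintype.card (D i) : ℝ) := by
  rw [isBalanced_of_capacity_pos hp hV, Fintype.sum_sigma]
  simp [mul_comm]

lemma rowRank_univ (hp : ∀ j, 0 < p j) (hV : 0 < capacity p V) (i : I) :
    V.rowRank Finset.univ i = Fintype.card (D i) := by
  have hle : ∀ i ∈ Finset.univ, (V.rowRank Finset.univ i : ℝ) ≤ Fintype.card (D i) :=
    fun i _ => Nat.cast_le.2 (V.rowRank_le_card _ i)
  have hsum : ∑ i, (V.rowRank Finset.univ i : ℝ) = ∑ i, (Fintype.card (D i) : ℝ) := by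
    refine (Finset.sum_le_sum hle).antisymm ?_
    rw [← sum_weight_univ hp hV]
    exact sub_nonneg.1 (slopeDefect_nonneg hp hV Finset.univ)
  exact_mod_cast (Finset.sum_eq_sum_iff_of_le hle).1 hsum i (Finset.mem_univ i)

lemma slopeDefect_univ (hp : ∀ j, 0 < p j) (hV : 0 < capacity p V) :
    slopeDefect p V Finset.univ = 0 := by
  simp only [slopeDefect, rowRank_univ hp hV, sum_weight_univ hp hV, sub_self]

end QuiverDatum

namespace QuiverDatum

variable {I J : Type*} {D : I → Type*} {N : J → Type*} {α : I → J → Type*}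

/-- `S` indexes a basis of the span of the rows at the source `i` lying over `T`. -/
structure IsRowBasis (V : QuiverDatum D N α) (T : Finset (Σ j, N j)) (i : I)
    (S : Finset (Σ s : Σ j, N j, α i s.1)) : Prop where
  mem : ∀ g ∈ S, g.1 ∈ T
  linearIndepOn : LinearIndepOn ℝ (V.row i) (S : Set (Σ s : Σ j, N j, α i s.1))
  subset_span : V.row i '' {g | g.1 ∈ T} ⊆
    Submodule.span ℝ (V.row i '' (S : Set (Σ s : Σ j, N j, α i s.1)))

/-- Every coordinate quotient of `V`, other than the two trivial ones, satisfies the semistability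
inequality strictly. -/
def IsCoordinateStable [Fintype I] [Fintype J] [∀ j, Fintype (N j)] (p : J → ℝ)
    (V : QuiverDatum D N α) : Prop :=
  ∀ T : Finset (Σ j, N j), T.Nonempty → T ≠ Finset.univ → 0 < slopeDefect p V T

/-- The total weight `h` of a choice `S` of rows at all sources over `T`, in excess of the
weighted total of `h` over `T`. -/
def rowExcess [Fintype I] (p : J → ℝ) (h : (Σ j, N j) → ℝ)
    (S : ∀ i, Finset (Σ s : Σ j, N j, α i s.1)) (T : Finset (Σ j, N j)) : ℝ :=
  ∑ i, ∑ g ∈ S i, h g.1 - ∑ s ∈ T, p s.1 * h s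

section Greedy

variable {V : QuiverDatum D N α} {T : Finset (Σ j, N j)} {i : I}
  {S : Finset (Σ s : Σ j, N j, α i s.1)}

lemma isRowBasis_empty (V : QuiverDatum D N α) (i : I) : V.IsRowBasis ∅ i ∅ :=
  ⟨by simp, by simp, by simp⟩

lemma IsRowBasis.card_eq [∀ i, Finite (D i)] (hS : V.IsRowBasis T i S) :
    S.card = V.rowRank T i := by
  have hspan : Submodule.span ℝ (V.row i '' {g | g.1 ∈ T}) =
      Submodule.span ℝ (V.row i '' (S : Set (Σ s : Σ j, N j, α i s.1))) :=
    (Submodule.span_le.2 hS.subset_span).antisymm (Submodule.span_mono (Set.image_mono hS.mem))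
  have hcard := finrank_span_eq_card (R := ℝ)
    (b := fun g : (S : Set (Σ s : Σ j, N j, α i s.1)) => V.row i g) hS.linearIndepOn
  rw [rowRank, hspan, Set.image_eq_range, hcard]
  simp

lemma IsRowBasis.exists_equiv [∀ i, Fintype (D i)] [∀ i, DecidableEq (D i)]
    (hS : V.IsRowBasis T i S) (hrank : V.rowRank T i = Fintype.card (D i)) :
    ∃ e : D i ≃ S, (Matrix.of fun x => V.row i (e x)).det ≠ 0 := by
  obtain ⟨e⟩ : Nonempty (D i ≃ S) := by
    rw [← Fintype.card_eq, Fintype.card_coe, hS.card_eq, hrank]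
  have hrows : LinearIndependent ℝ (Matrix.of fun x => V.row i (e x)).row :=
    hS.linearIndepOn.comp e e.injective
  exact ⟨e, ((isUnit_iff_isUnit_det _).1 (linearIndependent_rows_iff_isUnit.1 hrows)).ne_zero⟩

variable [Finite J] [∀ j, Finite (N j)] [∀ i j, Finite (α i j)] [DecidableEq (Σ j, N j)]

lemma IsRowBasis.exists_superset (hS : V.IsRowBasis T i S) (a : Σ j, N j) :
    ∃ S', V.IsRowBasis (insert a T) i S' ∧ S ⊆ S' ∧ ∀ g ∈ S', g ∉ S → g.1 = a := by
  obtain ⟨b, hbT, hSb, hspan, hb⟩ := exists_linearIndepOn_extension hS.linearIndepOn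
    (t := {g | g.1 ∈ insert a T}) fun g hg => Finset.mem_insert_of_mem (hS.mem g hg)
  have hfin : b.Finite := b.toFinite
  refine ⟨hfin.toFinset, ⟨fun g hg => hbT (by simpa using hg), by simpa using hb,
    by simpa using hspan⟩, fun g hg => by simpa using hSb hg, fun g hg hgS => ?_⟩
  replace hg : g ∈ b := by simpa using hg
  refine (Finset.mem_insert.1 (hbT hg)).resolve_right fun hgT => hgS ?_
  exact (hS.linearIndepOn.mem_span_iff (a := g)).1 (hS.subset_span ⟨g, hgT, rfl⟩)
    (hb.mono (Set.insert_subset hg hSb))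

variable [∀ i, Finite (D i)]

lemma IsRowBasis.exists_insert (hS : V.IsRowBasis T i S) (h : (Σ j, N j) → ℝ) (a : Σ j, N j) :
    ∃ S', V.IsRowBasis (insert a T) i S' ∧ ∑ g ∈ S', h g.1 =
      ∑ g ∈ S, h g.1 + ((V.rowRank (insert a T) i : ℝ) - V.rowRank T i) * h a := by
  classical
  obtain ⟨S', hS', hsub, hnew⟩ := hS.exists_superset a
  refine ⟨S', hS', ?_⟩
  have hdiff : ∑ g ∈ S' \ S, h g.1 = ∑ _ ∈ S' \ S, h a :=
    Finset.sum_congr rfl fun _ hg => by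
      rw [hnew _ (Finset.mem_sdiff.1 hg).1 (Finset.mem_sdiff.1 hg).2]
  rw [← hS.card_eq, ← hS'.card_eq, ← Finset.sum_sdiff hsub, hdiff, Finset.sum_const,
    nsmul_eq_mul, Finset.card_sdiff_of_subset hsub, Nat.cast_sub (Finset.card_le_card hsub),
    add_comm]

lemma exists_isRowBasis_insert [Fintype I] (p : J → ℝ) (h : (Σ j, N j) → ℝ)
    {S : ∀ i, Finset (Σ s : Σ j, N j, α i s.1)} (hS : ∀ i, V.IsRowBasis T i (S i))
    {a : Σ j, N j} (ha : a ∉ T) :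
    ∃ S' : ∀ i, Finset (Σ s : Σ j, N j, α i s.1), (∀ i, V.IsRowBasis (insert a T) i (S' i)) ∧
      rowExcess p h S' (insert a T) - slopeDefect p V (insert a T) * h a =
        rowExcess p h S T - slopeDefect p V T * h a := by
  choose S' hS' hsum using fun i => (hS i).exists_insert h a
  refine ⟨S', hS', ?_⟩
  rw [rowExcess, rowExcess, slopeDefect, slopeDefect, Finset.sum_insert ha, Finset.sum_insert ha,
    Finset.sum_congr rfl fun i _ => hsum i, Finset.sum_add_distrib, ← Finset.sum_mul,
    Finset.sum_sub_distrib]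
  ring

end Greedy

variable [Fintype I] [Fintype J] [∀ j, Fintype (N j)] {p : J → ℝ} {V : QuiverDatum D N α}

lemma IsCoordinateStable.slopeDefect_nonneg (hV : V.IsCoordinateStable p)
    (huniv : slopeDefect p V Finset.univ = 0) (T : Finset (Σ j, N j)) :
    0 ≤ slopeDefect p V T := by
  rcases T.eq_empty_or_nonempty with rfl | hT
  · exact (slopeDefect_empty p V).ge
  by_cases hT' : T = Finset.univ
  · exact (hT' ▸ huniv).ge
  · exact (hV T hT hT').le

variable [∀ i j, Finite (α i j)]

/- Rows are collected greedily, in decreasing order of `h`; the gap between consecutive values of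
`h` is weighted by the defect of the coordinates above it. -/
lemma IsCoordinateStable.exists_isRowBasis [∀ i, Finite (D i)] (hV : V.IsCoordinateStable p)
    (huniv : slopeDefect p V Finset.univ = 0) (h : (Σ j, N j) → ℝ) (T : Finset (Σ j, N j)) :
    ∃ S : ∀ i, Finset (Σ s : Σ j, N j, α i s.1), (∀ i, V.IsRowBasis T i (S i)) ∧
      ∀ c, (∀ x ∈ T, c ≤ h x) → 0 ≤ rowExcess p h S T - slopeDefect p V T * c ∧
        ((∃ x ∈ T, ∃ y ∈ T, h x < h y) → 0 < rowExcess p h S T - slopeDefect p V T * c) := by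
  classical
  induction T using Finset.induction_on_min_value h with
  | empty =>
    exact ⟨fun _ => ∅, isRowBasis_empty V, fun c _ => by
      simp [rowExcess, slopeDefect_empty]⟩
  | insert a T ha hmin ih =>
    obtain ⟨S, hS, hexcess⟩ := ih
    obtain ⟨S', hS', heq⟩ := exists_isRowBasis_insert p h hS ha
    refine ⟨S', hS', fun c hc => ?_⟩
    have hdefect : 0 ≤ slopeDefect p V (insert a T) * (h a - c) :=
      mul_nonneg (hV.slopeDefect_nonneg huniv _)
        (sub_nonneg.2 (hc a (Finset.mem_insert_self a T)))
    refine ⟨by linarith [(hexcess (h a) hmin).1], ?_⟩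
    rintro ⟨x, hx, y, hy, hxy⟩
    have hax : h a ≤ h x := (Finset.mem_insert.1 hx).elim (fun e => e ▸ le_rfl) (hmin x)
    have hyT : y ∈ T := (Finset.mem_insert.1 hy).resolve_left fun e => by
      rw [e] at hxy
      exact hxy.not_ge hax
    obtain ⟨b, hbT, hb⟩ := T.exists_min_image h ⟨y, hyT⟩
    rcases (hmin b hbT).lt_or_eq with hab | hab
    · have hpos : 0 < slopeDefect p V T * (h b - h a) :=
        mul_pos (hV T ⟨y, hyT⟩ fun e => ha (e ▸ Finset.mem_univ a)) (sub_pos.2 hab)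
      linarith [(hexcess (h b) hb).1]
    · have hpos := (hexcess (h a) hmin).2
        ⟨b, hbT, y, hyT, hab ▸ hax.trans_lt hxy⟩
      linarith

variable [∀ i, Fintype (D i)]

/-- The amount by which the total of `h` over the rows selected by `σ` exceeds its weighted total
over all sink coordinates. -/
def gain (p : J → ℝ) (σ : ∀ i, D i → Σ s : Σ j, N j, α i s.1) (h : (Σ j, N j) → ℝ) : ℝ :=
  ∑ i, ∑ x, h (σ i x).1 - ∑ s, p s.1 * h s

lemma IsCoordinateStable.exists_gain_pos [∀ i, DecidableEq (D i)] (hV : V.IsCoordinateStable p)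
    (huniv : slopeDefect p V Finset.univ = 0)
    (hrank : ∀ i, V.rowRank Finset.univ i = Fintype.card (D i)) {h : (Σ j, N j) → ℝ}
    {x y : Σ j, N j} (hxy : h x < h y) :
    ∃ σ : ∀ i, D i → Σ s : Σ j, N j, α i s.1, (∀ i, Function.Injective (σ i)) ∧
      (∀ i, (Matrix.of fun x => V.row i (σ i x)).det ≠ 0) ∧ 0 < gain p σ h := by
  obtain ⟨S, hS, hexcess⟩ := hV.exists_isRowBasis huniv h Finset.univ
  choose e he using fun i => (hS i).exists_equiv (hrank i)
  refine ⟨fun i x => e i x, fun i => Subtype.val_injective.comp (e i).injective, he, ?_⟩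
  obtain ⟨b, hb⟩ := (Set.toFinite (Set.range h)).bddBelow
  have hpos := (hexcess b fun z _ => hb ⟨z, rfl⟩).2
    ⟨x, Finset.mem_univ x, y, Finset.mem_univ y, hxy⟩
  rw [huniv, zero_mul, sub_zero] at hpos
  have hsum : ∀ i, ∑ x, h (e i x).1.1 = ∑ g ∈ S i, h g.1 := fun i => by
    rw [← Finset.sum_coe_sort (S i) fun g => h g.1]
    exact (e i).sum_comp fun g => h g.1.1
  simpa only [gain, hsum, rowExcess] using hpos

end QuiverDatum

lemma exists_pos_forall_exists_le_of_isCompact {X ι : Type*} [TopologicalSpace X] {K : Set X}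
    (hK : IsCompact K) {f : ι → X → ℝ} (hf : ∀ i, Continuous (f i))
    (hpos : ∀ x ∈ K, ∃ i, 0 < f i x) : ∃ c > 0, ∀ x ∈ K, ∃ i, c ≤ f i x := by
  obtain ⟨n, hn⟩ := hK.elim_directed_cover (fun n : ℕ => ⋃ i, {x | 1 / ((n : ℝ) + 1) < f i x})
    (fun n => isOpen_iUnion fun i => isOpen_lt continuous_const (hf i))
    (fun x hx => by
      obtain ⟨i, hi⟩ := hpos x hx
      obtain ⟨n, hn⟩ := exists_nat_one_div_lt hi
      exact Set.mem_iUnion.2 ⟨n, Set.mem_iUnion.2 ⟨i, hn⟩⟩)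
    (Monotone.directed_le fun m n hmn => Set.iUnion_mono fun i x (hx : _ < f i x) =>
      (Nat.one_div_le_one_div hmn).trans_lt hx)
  refine ⟨1 / ((n : ℝ) + 1), Nat.one_div_pos_of_nat, fun x hx => ?_⟩
  obtain ⟨i, hi⟩ := Set.mem_iUnion.1 (hn hx)
  exact ⟨i, le_of_lt hi⟩

section RealMatrix

variable {ι κ : Type*} [Fintype ι] [DecidableEq ι]

lemma compactSpace_orthogonalGroup : CompactSpace (orthogonalGroup ι ℝ) :=
  isCompact_iff_compactSpace.1 isCompact_orthogonalGroup

lemma sq_det_mul_prod_le_det_transpose_mul_diagonal_mul [Fintype κ] [DecidableEq κ]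
    (M : Matrix κ ι ℝ) {w : κ → ℝ} (hw : ∀ g, 0 ≤ w g) {σ : ι → κ} (hσ : Function.Injective σ) :
    (M.submatrix σ id).det ^ 2 * ∏ x, w (σ x) ≤ (Mᵀ * diagonal w * M).det := by
  let S := Finset.univ.image σ
  have hselect : Mᵀ * diagonal (fun g => if g ∈ S then w g else 0) * M =
      (M.submatrix σ id)ᵀ * diagonal (fun x => w (σ x)) * M.submatrix σ id := by
    ext x y
    rw [Matrix.mul_apply, Matrix.mul_apply]
    simp only [mul_diagonal, transpose_apply, submatrix_apply, id, mul_ite, mul_zero, ite_mul,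
      zero_mul, Finset.sum_ite_mem, Finset.univ_inter]
    exact Finset.sum_image hσ.injOn
  have hsplit : diagonal w = diagonal (fun g => if g ∈ S then w g else 0) +
      diagonal fun g => if g ∈ S then 0 else w g := by
    rw [diagonal_add]
    congr! with g
    split_ifs <;> simp
  have hdet : ((M.submatrix σ id)ᵀ * diagonal (fun x => w (σ x)) * M.submatrix σ id).det =
      (M.submatrix σ id).det ^ 2 * ∏ x, w (σ x) := by
    rw [det_mul, det_mul, det_transpose, det_diagonal]
    ring
  rw [hsplit, Matrix.mul_add, Matrix.add_mul, hselect, ← hdet]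
  refine det_le_det_add (posSemidef_transpose_mul_mul (.diagonal fun x => hw _) _)
    (posSemidef_transpose_mul_mul (.diagonal fun g => ?_) _)
  change 0 ≤ if g ∈ S then 0 else w g
  split_ifs
  exacts [le_rfl, hw g]

end RealMatrix

namespace QuiverDatum

section DiagonalTuple

variable {I J : Type*} {D : I → Type*} {N : J → Type*} {α : I → J → Type*}

section Selection

variable [Fintype I] [∀ i, Fintype (D i)]

lemma gain_smul [Fintype J] [∀ j, Fintype (N j)] (p : J → ℝ)
    (σ : ∀ i, D i → Σ s : Σ j, N j, α i s.1) (t : ℝ) (h : (Σ j, N j) → ℝ) :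
    gain p σ (t • h) = t * gain p σ h := by
  simp only [gain, Pi.smul_apply, smul_eq_mul, mul_sub, Finset.mul_sum, mul_left_comm]

variable [∀ i, DecidableEq (D i)]

/-- The constant in the exponential lower bound of the capacity functional at diagonal tuples
which is provided by the rows selected by `σ`. -/
noncomputable def selectionConstant (p : J → ℝ) (V : QuiverDatum D N α)
    (σ : ∀ i, D i → Σ s : Σ j, N j, α i s.1) : ℝ :=
  ∏ i, ((Matrix.of fun x => V.row i (σ i x)).det ^ 2 * ∏ x, p (σ i x).1.1)

lemma selectionConstant_pos {p : J → ℝ} (hp : ∀ j, 0 < p j) {V : QuiverDatum D N α}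
    {σ : ∀ i, D i → Σ s : Σ j, N j, α i s.1}
    (hσ : ∀ i, (Matrix.of fun x => V.row i (σ i x)).det ≠ 0) : 0 < selectionConstant p V σ :=
  Finset.prod_pos fun i _ => mul_pos (sq_pos_of_ne_zero (hσ i)) (Finset.prod_pos fun _ _ => hp _)

end Selection

/-- The tuple of diagonal matrices with logarithmic eigenvalues `u`. -/
noncomputable def expDiagonal [∀ j, DecidableEq (N j)] (u : (Σ j, N j) → ℝ) (j : J) :
    Matrix (N j) (N j) ℝ :=
  diagonal fun r => Real.exp (u ⟨j, r⟩)

lemma posDef_expDiagonal [∀ j, DecidableEq (N j)] [∀ j, Finite (N j)] (u : (Σ j, N j) → ℝ)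
    (j : J) : (expDiagonal u j).PosDef :=
  PosDef.diagonal fun _ => Real.exp_pos _

variable [∀ j, DecidableEq (N j)] [∀ j, Fintype (N j)] [Fintype J]

lemma prod_det_expDiagonal_rpow (p : J → ℝ) (u : (Σ j, N j) → ℝ) :
    ∏ j, (expDiagonal u j).det ^ p j = Real.exp (∑ s, p s.1 * u s) := by
  rw [Fintype.sum_sigma, Real.exp_sum]
  refine Finset.prod_congr rfl fun j _ => ?_
  rw [expDiagonal, det_diagonal, ← Real.exp_sum, ← Real.exp_mul, mul_comm]
  simp only [Finset.mul_sum]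

variable [∀ i j, Fintype (α i j)] {p : J → ℝ}

lemma gram_expDiagonal [∀ i j, DecidableEq (α i j)] [DecidableEq J] (p : J → ℝ)
    (V : QuiverDatum D N α) (u : (Σ j, N j) → ℝ) (i : I) :
    gram p V (expDiagonal u) i = (Matrix.of (V.row i))ᵀ *
      diagonal (fun g : Σ s : Σ j, N j, α i s.1 => p g.1.1 * Real.exp (u g.1)) *
        Matrix.of (V.row i) := by
  ext x y
  rw [Matrix.mul_apply, Fintype.sum_sigma, Fintype.sum_sigma]
  simp only [gram, expDiagonal, Matrix.sum_apply, Matrix.smul_apply, Matrix.mul_apply (M := _ * _),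
    mul_diagonal, transpose_apply, of_apply, row, smul_eq_mul, Finset.mul_sum]
  refine Finset.sum_congr rfl fun j _ => ?_
  rw [Finset.sum_comm]
  refine Finset.sum_congr rfl fun r _ => Finset.sum_congr rfl fun a _ => ?_
  ring

variable [Fintype I] [∀ i, Fintype (D i)] [∀ i, DecidableEq (D i)]

lemma selectionConstant_mul_exp_gain_le (hp : ∀ j, 0 < p j) (V : QuiverDatum D N α)
    {σ : ∀ i, D i → Σ s : Σ j, N j, α i s.1} (hσ : ∀ i, Function.Injective (σ i))
    (u : (Σ j, N j) → ℝ) :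
    selectionConstant p V σ * Real.exp (gain p σ u) ≤ value p V (expDiagonal u) := by
  classical
  have hgram : ∀ i, (Matrix.of fun x => V.row i (σ i x)).det ^ 2 *
      ∏ x, (p (σ i x).1.1 * Real.exp (u (σ i x).1)) ≤ (gram p V (expDiagonal u) i).det :=
    fun i => by
      rw [gram_expDiagonal]
      exact sq_det_mul_prod_le_det_transpose_mul_diagonal_mul (Matrix.of (V.row i))
        (fun g => (mul_pos (hp g.1.1) (Real.exp_pos (u g.1))).le) (hσ i)
  rw [value, prod_det_expDiagonal_rpow, le_div_iff₀ (Real.exp_pos _), mul_assoc, ← Real.exp_add,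
    gain, sub_add_cancel, Real.exp_sum, selectionConstant, ← Finset.prod_mul_distrib]
  refine Finset.prod_le_prod (fun i _ => ?_) fun i _ => ?_
  · have hweight : 0 ≤ ∏ x, p (σ i x).1.1 := Finset.prod_nonneg fun x _ => (hp _).le
    positivity
  · rw [Real.exp_sum, mul_assoc, ← Finset.prod_mul_distrib]
    exact hgram i

end DiagonalTuple

end QuiverDatum

namespace QuiverDatum

variable {I J : Type*} {D : I → Type*} {N : J → Type*} {α : I → J → Type*}

section Profiles

variable {X : Type*}

/-- The normalized profiles of logarithmic eigenvalues, with minimum `0` and maximum `1`. -/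
def normalizedProfiles (X : Type*) : Set (X → ℝ) :=
  {h | (∀ s, h s ∈ Set.Icc 0 1) ∧ (∃ s, h s = 0) ∧ ∃ s, h s = 1}

variable [Finite X]

lemma isCompact_normalizedProfiles : IsCompact (normalizedProfiles X) := by
  have hattained : ∀ c : ℝ, IsClosed {h : X → ℝ | ∃ s, h s = c} := fun c => by
    rw [Set.ofPred_exists]
    exact isClosed_iUnion_of_finite fun s => isClosed_eq (continuous_apply s) continuous_const
  have hbox : IsCompact {h : X → ℝ | ∀ s, h s ∈ Set.Icc (0 : ℝ) 1} := by
    simpa [Set.pi] using isCompact_univ_pi fun _ : X => isCompact_Icc (a := (0 : ℝ)) (b := 1)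
  exact hbox.inter_right ((hattained 0).inter (hattained 1))

lemma eq_const_or_exists_normalizedProfiles (u : X → ℝ) :
    ∃ b, (∀ s, u s = b) ∨ ∃ t > 0, ∃ h ∈ normalizedProfiles X, ∀ s, u s = b + t * h s := by
  rcases isEmpty_or_nonempty X with hX | hX
  · exact ⟨0, .inl fun s => hX.elim s⟩
  obtain ⟨x, hx⟩ := Finite.exists_min u
  obtain ⟨y, hy⟩ := Finite.exists_max u
  refine ⟨u x, (hx y).eq_or_lt.imp (fun hxy s => (hxy ▸ hy s).antisymm (hx s)) fun hxy => ?_⟩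
  have ht := sub_pos.2 hxy
  refine ⟨u y - u x, ht, fun s => (u s - u x) / (u y - u x), ⟨fun s => ⟨?_, ?_⟩, ⟨x, by simp⟩,
    ⟨y, div_self ht.ne'⟩⟩, fun s => ?_⟩
  · exact div_nonneg (sub_nonneg.2 (hx s)) ht.le
  · exact div_le_one_of_le₀ (sub_le_sub_right (hy s) _) ht.le
  · field_simp
    ring

end Profiles

lemma continuous_gain [Fintype I] [∀ i, Fintype (D i)] [Fintype J] [∀ j, Fintype (N j)]
    (p : J → ℝ) (σ : ∀ i, D i → Σ s : Σ j, N j, α i s.1) :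
    Continuous (gain p σ) := by
  unfold gain
  fun_prop

variable [∀ i, Fintype (D i)] [∀ i, DecidableEq (D i)] [∀ j, Fintype (N j)]
  [∀ j, DecidableEq (N j)]

/-- The datum `V` in the orthonormal bases `Q` at the sinks. -/
def rotate (Q : ∀ j, orthogonalGroup (N j) ℝ) (V : QuiverDatum D N α) : QuiverDatum D N α :=
  V.baseChange (fun i => .refl (D i)) fun j => .ofOrthogonal (Q j).2

/-- The positive definite tuple with eigenbases `Q` and logarithmic eigenvalues `u`. -/
noncomputable def spectralTuple (Q : ∀ j, orthogonalGroup (N j) ℝ) (u : (Σ j, N j) → ℝ) (j : J) :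
    Matrix (N j) (N j) ℝ :=
  (Q j : Matrix (N j) (N j) ℝ)ᵀ * expDiagonal u j * (Q j : Matrix (N j) (N j) ℝ)

lemma posDef_spectralTuple (Q : ∀ j, orthogonalGroup (N j) ℝ) (u : (Σ j, N j) → ℝ) (j : J) :
    (spectralTuple Q u j).PosDef :=
  (InvertibleMatrix.ofOrthogonal (Q j).2).posDef_transpose_mul_mul (posDef_expDiagonal u j)

lemma exists_eq_spectralTuple {Y : ∀ j, Matrix (N j) (N j) ℝ} (hY : ∀ j, (Y j).PosDef) :
    ∃ Q u, Y = spectralTuple Q u := by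
  choose Q hQ l hl hYQ using fun j => exists_orthogonal_diagonalization (hY j)
  refine ⟨fun j => ⟨Q j, hQ j⟩, fun s => Real.log (l s.1 s.2), funext fun j => ?_⟩
  simp only [spectralTuple, expDiagonal, Real.exp_log (hl _ _), hYQ]

lemma continuous_spectralTuple (j : J) :
    Continuous fun z : (∀ j, orthogonalGroup (N j) ℝ) × ((Σ j, N j) → ℝ) =>
      spectralTuple z.1 z.2 j := by
  unfold spectralTuple expDiagonal
  fun_prop

lemma spectralTuple_const_add (Q : ∀ j, orthogonalGroup (N j) ℝ) (b : ℝ) (u : (Σ j, N j) → ℝ) :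
    spectralTuple Q (fun s => b + u s) = fun j => Real.exp b • spectralTuple Q u j := by
  funext j
  have hdiag : expDiagonal (fun s => b + u s) j = Real.exp b • expDiagonal u j := by
    simp [expDiagonal, Real.exp_add, ← diagonal_smul, Pi.smul_def]
  simp [spectralTuple, hdiag]

variable [Fintype I] {p : J → ℝ}

lemma continuous_selectionConstant_rotate (V : QuiverDatum D N α)
    (σ : ∀ i, D i → Σ s : Σ j, N j, α i s.1) :
    Continuous fun Q : ∀ j, orthogonalGroup (N j) ℝ => selectionConstant p (V.rotate Q) σ := by
  refine continuous_finsetProd _ fun i _ => ((Continuous.matrix_det ?_).pow 2).mul continuous_const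
  refine continuous_pi fun x => continuous_pi fun y => ?_
  have hrotate : ∀ j a, Continuous fun Q : ∀ j, orthogonalGroup (N j) ℝ => V.rotate Q i j a :=
    fun j a => by
      simp only [rotate, baseChange, InvertibleMatrix.ofOrthogonal_mat]
      fun_prop
  exact (hrotate _ _).matrix_elem _ _

variable [Fintype J] [∀ i j, Fintype (α i j)] {V : QuiverDatum D N α}

lemma value_rotate_expDiagonal (V : QuiverDatum D N α) (Q : ∀ j, orthogonalGroup (N j) ℝ)
    (u : (Σ j, N j) → ℝ) :
    value p (V.rotate Q) (expDiagonal u) = value p V (spectralTuple Q u) := by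
  have hfactor : volumeFactor p (fun i => .refl (D i))
      (fun j => .ofOrthogonal (Q j).2) = 1 := by
    simp [volumeFactor, InvertibleMatrix.detSq, (mem_orthogonalGroup_iff _ ℝ).1 (Q _).2]
  rw [rotate, value_baseChange _ _ V (posDef_expDiagonal u), hfactor, one_mul]
  rfl

lemma capacity_rotate_pos (hp : ∀ j, 0 < p j) (hV : 0 < capacity p V)
    (Q : ∀ j, orthogonalGroup (N j) ℝ) : 0 < capacity p (V.rotate Q) :=
  (capacity_baseChange_pos hp _ _).2 hV

/-- Every coordinate quotient of `V` in every choice of orthonormal bases at the sinks, other than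
the two trivial ones, satisfies the semistability inequality strictly. -/
def IsStable (p : J → ℝ) (V : QuiverDatum D N α) : Prop :=
  ∀ Q, (V.rotate Q).IsCoordinateStable p

lemma IsStable.exists_exp_le_value (hp : ∀ j, 0 < p j) (hV : 0 < capacity p V)
    (hstable : V.IsStable p) :
    ∃ c > 0, ∀ Q, ∀ h ∈ normalizedProfiles (Σ j, N j), ∀ t ≥ 0,
      c * Real.exp (t * c) ≤ value p V (spectralTuple Q (t • h)) := by
  have := fun j => compactSpace_orthogonalGroup (ι := N j)
  have hpos : ∀ z ∈ Set.univ ×ˢ normalizedProfiles (Σ j, N j),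
      ∃ σ : {σ : ∀ i, D i → Σ s : Σ j, N j, α i s.1 // ∀ i, Function.Injective (σ i)},
        0 < min (selectionConstant p (V.rotate z.1) σ) (gain p σ.1 z.2) := by
    rintro ⟨Q, h⟩ ⟨-, -, ⟨x, hx⟩, y, hy⟩
    have hVQ := capacity_rotate_pos hp hV Q
    obtain ⟨σ, hinj, hdet, hgain⟩ := (hstable Q).exists_gain_pos (slopeDefect_univ hp hVQ)
      (rowRank_univ hp hVQ) (hx.trans_lt (one_pos.trans_eq hy.symm))
    exact ⟨⟨σ, hinj⟩, lt_min (selectionConstant_pos hp hdet) hgain⟩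
  have hcompact : IsCompact ((Set.univ : Set (∀ j, orthogonalGroup (N j) ℝ)) ×ˢ
      normalizedProfiles (Σ j, N j)) := isCompact_univ.prod isCompact_normalizedProfiles
  have hcont : ∀ σ : {σ : ∀ i, D i → Σ s : Σ j, N j, α i s.1 // ∀ i, Function.Injective (σ i)},
      Continuous fun z : (∀ j, orthogonalGroup (N j) ℝ) × ((Σ j, N j) → ℝ) =>
        min (selectionConstant p (V.rotate z.1) σ) (gain p σ.1 z.2) := fun σ =>
    ((continuous_selectionConstant_rotate V σ.1).comp continuous_fst).min
      ((continuous_gain p σ.1).comp continuous_snd)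
  obtain ⟨c, hc, hbound⟩ := exists_pos_forall_exists_le_of_isCompact hcompact hcont hpos
  refine ⟨c, hc, fun Q h hh t ht => ?_⟩
  obtain ⟨σ, hσ⟩ := hbound (Q, h) ⟨Set.mem_univ Q, hh⟩
  obtain ⟨hconst, hgain⟩ := le_min_iff.1 hσ
  calc c * Real.exp (t * c)
      ≤ selectionConstant p (V.rotate Q) σ * Real.exp (t * gain p σ.1 h) :=
        mul_le_mul hconst (by gcongr) (Real.exp_pos _).le (hc.le.trans hconst)
    _ ≤ value p (V.rotate Q) (expDiagonal (t • h)) := by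
        rw [← gain_smul]
        exact selectionConstant_mul_exp_gain_le hp _ σ.2 _
    _ = value p V (spectralTuple Q (t • h)) := value_rotate_expDiagonal V Q _

lemma IsStable.exists_bounded_spectralTuple (hp : ∀ j, 0 < p j) (hV : 0 < capacity p V)
    (hstable : V.IsStable p) (K : ℝ) :
    ∃ R, ∀ Y : ∀ j, Matrix (N j) (N j) ℝ, (∀ j, (Y j).PosDef) → value p V Y ≤ K →
      ∃ Q, ∃ u ∈ Set.univ.pi fun _ : Σ j, N j => Set.Icc 0 R,
        value p V (spectralTuple Q u) = value p V Y := by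
  obtain ⟨c, hc, hcoercive⟩ := hstable.exists_exp_le_value hp hV
  refine ⟨K / c ^ 2, fun Y hY hYK => ?_⟩
  obtain ⟨Q, u, rfl⟩ := exists_eq_spectralTuple hY
  have hR : 0 ≤ K / c ^ 2 := div_nonneg ((value_nonneg hp V hY).trans hYK) (sq_nonneg c)
  have hvalue : ∀ b u, value p V (spectralTuple Q fun s => b + u s) =
      value p V (spectralTuple Q u) := fun b u => by
    rw [spectralTuple_const_add]
    exact value_smul (isBalanced_of_capacity_pos hp hV) (Real.exp_pos b) (posDef_spectralTuple Q u)
  obtain ⟨b, hu | ⟨t, ht, h, hh, hu⟩⟩ := eq_const_or_exists_normalizedProfiles u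
  · refine ⟨Q, 0, fun _ _ => ⟨le_rfl, hR⟩, ?_⟩
    rw [← hvalue b, funext hu]
    simp
  · obtain rfl : u = fun s => b + (t • h) s := funext hu
    rw [hvalue] at hYK ⊢
    have htR : t ≤ K / c ^ 2 := by
      rw [le_div_iff₀ (by positivity)]
      calc t * c ^ 2 = c * (t * c) := by ring
        _ ≤ c * Real.exp (t * c) := by
          gcongr
          linarith [Real.add_one_le_exp (t * c)]
        _ ≤ K := (hcoercive Q h hh t ht.le).trans hYK
    exact ⟨Q, t • h, fun s _ => ⟨mul_nonneg ht.le (hh.1 s).1,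
      (mul_le_of_le_one_right ht.le (hh.1 s).2).trans htR⟩, rfl⟩

lemma IsStable.isExtremizable (hp : ∀ j, 0 < p j) (hV : 0 < capacity p V)
    (hstable : V.IsStable p) : IsExtremizable p V := by
  have := fun j => compactSpace_orthogonalGroup (ι := N j)
  obtain ⟨R, hR⟩ := hstable.exists_bounded_spectralTuple hp hV (value p V fun _ => 1)
  obtain ⟨Q₀, u₀, hu₀, hvalue₀⟩ := hR (fun _ => 1) (fun _ => PosDef.one) le_rfl
  have hcont : Continuous fun z : (∀ j, orthogonalGroup (N j) ℝ) × ((Σ j, N j) → ℝ) =>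
      value p V (spectralTuple z.1 z.2) :=
    continuous_value (fun _ _ _ => continuous_const) continuous_spectralTuple
      fun z => posDef_spectralTuple z.1 z.2
  have hcompact : IsCompact ((Set.univ : Set (∀ j, orthogonalGroup (N j) ℝ)) ×ˢ
      (Set.univ.pi fun _ : Σ j, N j => Set.Icc 0 R)) :=
    isCompact_univ.prod (isCompact_univ_pi fun _ => isCompact_Icc)
  obtain ⟨⟨Q, u⟩, -, hmin⟩ := hcompact.exists_isMinOn ⟨(Q₀, u₀), Set.mem_univ Q₀, hu₀⟩
    hcont.continuousOn
  have hbox : ∀ Q', ∀ u' ∈ Set.univ.pi fun _ : Σ j, N j => Set.Icc 0 R,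
      value p V (spectralTuple Q u) ≤ value p V (spectralTuple Q' u') :=
    fun Q' u' hu' => isMinOn_iff.1 hmin (Q', u') ⟨Set.mem_univ Q', hu'⟩
  refine ⟨hV, spectralTuple Q u, posDef_spectralTuple Q u, le_antisymm (le_capacity fun Y hY => ?_)
    (capacity_le_value hp V (posDef_spectralTuple Q u))⟩
  rcases le_total (value p V Y) (value p V fun _ => 1) with hle | hle
  · obtain ⟨Q', u', hu', hvalue⟩ := hR Y hY hle
    exact (hbox Q' u' hu').trans_eq hvalue
  · exact ((hbox Q₀ u₀ hu₀).trans_eq hvalue₀).trans hle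

lemma isExtremizable_or_exists_slopeDefect_eq_zero (hp : ∀ j, 0 < p j) (hV : 0 < capacity p V) :
    IsExtremizable p V ∨ ∃ Q, ∃ T : Finset (Σ j, N j), T.Nonempty ∧ T ≠ Finset.univ ∧
      slopeDefect p (V.rotate Q) T = 0 := by
  rw [or_iff_not_imp_right]
  intro h
  refine IsStable.isExtremizable hp hV fun Q T hT hT' => ?_
  exact (slopeDefect_nonneg hp (capacity_rotate_pos hp hV Q) T).lt_of_ne' fun h0 =>
    h ⟨Q, T, hT, hT', h0⟩

end QuiverDatum

/-! ### Block reductions -/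

section Labels

variable {X Y : Type*} {s t : ℕ}

/-- The labels on a disjoint union for which all labels of the first summand precede those of the
second one. -/
def sumLabel (β₁ : X → Fin s) (β₂ : Y → Fin t) : X ⊕ Y → Fin (s + t) :=
  Sum.elim (Fin.castAdd t ∘ β₁) (Fin.natAdd s ∘ β₂)

lemma castAdd_lt_natAdd (a : Fin s) (b : Fin t) : Fin.castAdd t a < Fin.natAdd s b :=
  Fin.lt_def.2 (a.isLt.trans_le (Nat.le_add_right s b))

variable [Fintype X] [Fintype Y] (β₁ : X → Fin s) (β₂ : Y → Fin t)

lemma card_fiber_sumLabel_castAdd (ℓ : Fin s) :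
    Fintype.card {z // sumLabel β₁ β₂ z = Fin.castAdd t ℓ} = Fintype.card {x // β₁ x = ℓ} := by
  simp only [Fintype.card_subtype, Finset.card_filter, Fintype.sum_sum_type]
  simp [sumLabel, Fin.castAdd_inj, (castAdd_lt_natAdd _ _).ne']

lemma card_fiber_sumLabel_natAdd (ℓ : Fin t) :
    Fintype.card {z // sumLabel β₁ β₂ z = Fin.natAdd s ℓ} = Fintype.card {y // β₂ y = ℓ} := by
  simp only [Fintype.card_subtype, Finset.card_filter, Fintype.sum_sum_type]
  simp [sumLabel, Fin.natAdd_inj, (castAdd_lt_natAdd _ _).ne]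

end Labels

namespace QuiverDatum

variable {I J : Type*} {D D' : I → Type*} {N N' : J → Type*} {α : I → J → Type*}

/-- The block-diagonal part of `V` with respect to the labels `β`, `γ` of its columns and rows. -/
def blockDiagonal {L : Type*} [DecidableEq L] (β : ∀ i, D i → L) (γ : ∀ j, N j → L)
    (V : QuiverDatum D N α) : QuiverDatum D N α :=
  fun i j a => Matrix.of fun r c => if γ j r = β i c then V i j a r c else 0

lemma blockDiagonal_blockTriangular {D₁ D₂ : I → Type*} {N₁ N₂ : J → Type*} {s t : ℕ}
    {β₁ : ∀ i, D₁ i → Fin s} {γ₁ : ∀ j, N₁ j → Fin s} {β₂ : ∀ i, D₂ i → Fin t}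
    {γ₂ : ∀ j, N₂ j → Fin t} {V₁ : QuiverDatum D₁ N₁ α} {X : QuiverDatum D₂ N₁ α}
    {V₂ : QuiverDatum D₂ N₂ α} :
    blockDiagonal (fun i => sumLabel (β₁ i) (β₂ i)) (fun j => sumLabel (γ₁ j) (γ₂ j))
        (blockTriangular V₁ X V₂) =
      blockTriangular (blockDiagonal β₁ γ₁ V₁) 0 (blockDiagonal β₂ γ₂ V₂) := by
  funext i j a
  ext (r | r) (c | c) <;>
    simp [blockDiagonal, blockTriangular, sumLabel, Fin.castAdd_inj, Fin.natAdd_inj,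
      (castAdd_lt_natAdd _ _).ne, (castAdd_lt_natAdd _ _).ne']

variable [∀ i, Fintype (D i)] [∀ j, Fintype (N j)] [∀ i, DecidableEq (D i)]
  [∀ j, DecidableEq (N j)] [∀ i, Fintype (D' i)] [∀ j, Fintype (N' j)] [∀ i, DecidableEq (D' i)]
  [∀ j, DecidableEq (N' j)]

lemma baseChange_trans {D'' : I → Type*} {N'' : J → Type*} [∀ i, Fintype (D'' i)]
    [∀ j, Fintype (N'' j)] [∀ i, DecidableEq (D'' i)] [∀ j, DecidableEq (N'' j)]
    (P : ∀ i, InvertibleMatrix (D i) (D' i)) (Q : ∀ j, InvertibleMatrix (N j) (N' j))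
    (P' : ∀ i, InvertibleMatrix (D' i) (D'' i)) (Q' : ∀ j, InvertibleMatrix (N' j) (N'' j))
    (V : QuiverDatum D N α) :
    V.baseChange (fun i => (P i).trans (P' i)) (fun j => (Q j).trans (Q' j)) =
      (V.baseChange P Q).baseChange P' Q' := by
  funext i j a
  simp only [baseChange, InvertibleMatrix.trans_mat, InvertibleMatrix.trans_inv, Matrix.mul_assoc]

lemma baseChange_ofEquiv (e : ∀ i, D i ≃ D' i) (u : ∀ j, N j ≃ N' j) (V : QuiverDatum D N α) :
    V.baseChange (fun i => .ofEquiv (e i)) (fun j => .ofEquiv (u j)) =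
      fun i j a => (V i j a).submatrix (u j).symm (e i).symm := by
  funext i j a
  ext r c
  simp [baseChange, Matrix.mul_apply, Matrix.one_apply]

variable [Fintype I] [Fintype J] [∀ i j, Fintype (α i j)] {p : J → ℝ} {V : QuiverDatum D N α}

/-- With respect to the ordered labels `β`, `γ` of the coordinates, `V` is block upper triangular
with balanced diagonal blocks, and its block-diagonal part is extremizable and has the same
capacity. -/
structure IsBlockReduced (p : J → ℝ) {s : ℕ} (β : ∀ i, D i → Fin s) (γ : ∀ j, N j → Fin s)
    (V : QuiverDatum D N α) : Prop where
  isBalanced (ℓ : Fin s) : IsBalanced p (fun i => Fintype.card {c // β i c = ℓ})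
    fun j => Fintype.card {r // γ j r = ℓ}
  eq_zero (i : I) (j : J) (a : α i j) (r : N j) (c : D i) : β i c < γ j r → V i j a r c = 0
  isExtremizable : IsExtremizable p (blockDiagonal β γ V)
  capacity_eq : capacity p V = capacity p (blockDiagonal β γ V)

lemma IsBlockReduced.reindex (hp : ∀ j, 0 < p j) {s : ℕ} {β : ∀ i, D i → Fin s}
    {γ : ∀ j, N j → Fin s} (h : V.IsBlockReduced p β γ) (e : ∀ i, D i ≃ D' i)
    (u : ∀ j, N j ≃ N' j) :
    (V.baseChange (fun i => .ofEquiv (e i)) (fun j => .ofEquiv (u j))).IsBlockReduced p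
      (fun i => β i ∘ (e i).symm) (fun j => γ j ∘ (u j).symm) := by
  have hdiag : blockDiagonal (fun i => β i ∘ (e i).symm) (fun j => γ j ∘ (u j).symm)
      (V.baseChange (fun i => .ofEquiv (e i)) (fun j => .ofEquiv (u j))) =
      (blockDiagonal β γ V).baseChange (fun i => .ofEquiv (e i)) (fun j => .ofEquiv (u j)) := by
    rw [baseChange_ofEquiv, baseChange_ofEquiv]
    rfl
  constructor
  · intro ℓ
    have hsource : ∀ i, Fintype.card {c // β i ((e i).symm c) = ℓ} =
        Fintype.card {c // β i c = ℓ} :=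
      fun i => Fintype.card_congr ((e i).symm.subtypeEquiv fun _ => Iff.rfl)
    have hsink : ∀ j, Fintype.card {r // γ j ((u j).symm r) = ℓ} =
        Fintype.card {r // γ j r = ℓ} :=
      fun j => Fintype.card_congr ((u j).symm.subtypeEquiv fun _ => Iff.rfl)
    simpa only [Function.comp_apply, hsource, hsink] using h.isBalanced ℓ
  · intro i j a r c hlt
    rw [baseChange_ofEquiv]
    exact h.eq_zero i j a _ _ hlt
  · exact hdiag ▸ h.isExtremizable.baseChange hp _ _
  · rw [hdiag, capacity_baseChange hp, capacity_baseChange hp, h.capacity_eq]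

lemma IsBlockReduced.blockTriangular {D₁ D₂ : I → Type*} {N₁ N₂ : J → Type*}
    [∀ i, Fintype (D₁ i)] [∀ i, Fintype (D₂ i)] [∀ j, Fintype (N₁ j)] [∀ j, Fintype (N₂ j)]
    [∀ i, DecidableEq (D₁ i)] [∀ i, DecidableEq (D₂ i)] [∀ j, DecidableEq (N₁ j)]
    [∀ j, DecidableEq (N₂ j)] (hp : ∀ j, 0 < p j) {s t : ℕ} {β₁ : ∀ i, D₁ i → Fin s}
    {γ₁ : ∀ j, N₁ j → Fin s} {β₂ : ∀ i, D₂ i → Fin t} {γ₂ : ∀ j, N₂ j → Fin t}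
    {V₁ : QuiverDatum D₁ N₁ α} {V₂ : QuiverDatum D₂ N₂ α} (h₁ : V₁.IsBlockReduced p β₁ γ₁)
    (h₂ : V₂.IsBlockReduced p β₂ γ₂) (X : QuiverDatum D₂ N₁ α) :
    (blockTriangular V₁ X V₂).IsBlockReduced p (fun i => sumLabel (β₁ i) (β₂ i))
      (fun j => sumLabel (γ₁ j) (γ₂ j)) := by
  have hbal := isBalanced_of_capacity_pos hp h₂.isExtremizable.1
  constructor
  · refine Fin.addCases (fun ℓ => ?_) fun ℓ => ?_
    · simpa only [card_fiber_sumLabel_castAdd] using h₁.isBalanced ℓ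
    · simpa only [card_fiber_sumLabel_natAdd] using h₂.isBalanced ℓ
  · rintro i j a (r | r) (c | c) hlt
    · exact h₁.eq_zero i j a r c hlt
    · exact absurd hlt (castAdd_lt_natAdd _ _).not_gt
    · rfl
    · exact h₂.eq_zero i j a r c ((Fin.natAdd_lt_natAdd_iff _).1 hlt)
  · rw [blockDiagonal_blockTriangular]
    exact h₁.isExtremizable.blockTriangular_zero hp h₂.isExtremizable
  · rw [blockDiagonal_blockTriangular, capacity_blockTriangular hp hbal,
      capacity_blockTriangular hp hbal, h₁.capacity_eq, h₂.capacity_eq]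

/-- In suitable coordinates with suitable labels, `V` is block-reduced. -/
def HasBlockReduction (p : J → ℝ) (V : QuiverDatum D N α) : Prop :=
  ∃ (P : ∀ i, InvertibleMatrix (D i) (D i)) (Q : ∀ j, InvertibleMatrix (N j) (N j)) (s : ℕ)
    (β : ∀ i, D i → Fin s) (γ : ∀ j, N j → Fin s), (V.baseChange P Q).IsBlockReduced p β γ

lemma IsExtremizable.hasBlockReduction (hp : ∀ j, 0 < p j) (h : IsExtremizable p V) :
    V.HasBlockReduction p := by
  have hdiag : blockDiagonal (fun _ _ => (0 : Fin 1)) (fun _ _ => 0) V = V := by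
    funext i j a
    ext r c
    simp [blockDiagonal]
  refine ⟨fun i => .refl (D i), fun j => .refl (N j), 1, fun _ _ => 0, fun _ _ => 0, ?_⟩
  rw [baseChange_refl]
  refine ⟨fun ℓ => ?_, fun i j a r c hlt => (lt_irrefl _ hlt).elim, ?_, ?_⟩
  · simpa [Subsingleton.elim _ ℓ] using isBalanced_of_capacity_pos hp h.1
  · rwa [hdiag]
  · rw [hdiag]

lemma HasBlockReduction.of_baseChange (hp : ∀ j, 0 < p j)
    (P₀ : ∀ i, InvertibleMatrix (D i) (D' i)) (Q₀ : ∀ j, InvertibleMatrix (N j) (N' j))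
    (h : (V.baseChange P₀ Q₀).HasBlockReduction p) : V.HasBlockReduction p := by
  obtain ⟨P, Q, s, β, γ, h⟩ := h
  let e i := Fintype.equivOfCardEq (P₀ i).card_eq.symm
  let u j := Fintype.equivOfCardEq (Q₀ j).card_eq.symm
  refine ⟨fun i => ((P₀ i).trans (P i)).trans (.ofEquiv (e i)),
    fun j => ((Q₀ j).trans (Q j)).trans (.ofEquiv (u j)), s,
    fun i => β i ∘ (e i).symm, fun j => γ j ∘ (u j).symm, ?_⟩
  rw [baseChange_trans, baseChange_trans]
  exact h.reindex hp e u

lemma HasBlockReduction.blockTriangular {D₁ D₂ : I → Type*} {N₁ N₂ : J → Type*}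
    [∀ i, Fintype (D₁ i)] [∀ i, Fintype (D₂ i)] [∀ j, Fintype (N₁ j)] [∀ j, Fintype (N₂ j)]
    [∀ i, DecidableEq (D₁ i)] [∀ i, DecidableEq (D₂ i)] [∀ j, DecidableEq (N₁ j)]
    [∀ j, DecidableEq (N₂ j)] (hp : ∀ j, 0 < p j) {V₁ : QuiverDatum D₁ N₁ α}
    {V₂ : QuiverDatum D₂ N₂ α} (h₁ : V₁.HasBlockReduction p) (h₂ : V₂.HasBlockReduction p)
    (X : QuiverDatum D₂ N₁ α) : (blockTriangular V₁ X V₂).HasBlockReduction p := by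
  obtain ⟨P₁, Q₁, s, β₁, γ₁, h₁⟩ := h₁
  obtain ⟨P₂, Q₂, t, β₂, γ₂, h₂⟩ := h₂
  refine ⟨fun i => (P₁ i).sum (P₂ i), fun j => (Q₁ j).sum (Q₂ j), s + t,
    fun i => sumLabel (β₁ i) (β₂ i), fun j => sumLabel (γ₁ j) (γ₂ j), ?_⟩
  rw [baseChange_sum_blockTriangular]
  exact h₁.blockTriangular hp h₂ _

end QuiverDatum

namespace QuiverDatum

section Splitting

variable {I J : Type*} {α : I → J → Type*} [Fintype I] [Fintype J] [∀ i j, Fintype (α i j)]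
  {p : J → ℝ}

lemma capacity_pos_of_capacity_blockTriangular_pos {D₁ D₂ : I → Type*} {N₁ N₂ : J → Type*}
    [∀ i, Fintype (D₁ i)] [∀ i, Fintype (D₂ i)] [∀ j, Fintype (N₁ j)] [∀ j, Fintype (N₂ j)]
    [∀ i, DecidableEq (D₁ i)] [∀ i, DecidableEq (D₂ i)] [∀ j, DecidableEq (N₁ j)]
    [∀ j, DecidableEq (N₂ j)] {V₁ : QuiverDatum D₁ N₁ α} {X : QuiverDatum D₂ N₁ α}
    {V₂ : QuiverDatum D₂ N₂ α} (hp : ∀ j, 0 < p j)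
    (hbal : IsBalanced p (fun i => Fintype.card (D₂ i)) fun j => Fintype.card (N₂ j))
    (h : 0 < capacity p (blockTriangular V₁ X V₂)) : 0 < capacity p V₁ ∧ 0 < capacity p V₂ := by
  rw [capacity_blockTriangular hp hbal] at h
  exact ⟨pos_of_mul_pos_left h (capacity_nonneg hp V₂),
    pos_of_mul_pos_right h (capacity_nonneg hp V₁)⟩

variable {D : I → Type*} {N : J → Type*} [∀ i, Fintype (D i)] [∀ j, Fintype (N j)]
  [∀ i, DecidableEq (D i)] [∀ j, DecidableEq (N j)] {V : QuiverDatum D N α}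

lemma exists_baseChange_eq_blockTriangular_of_slopeDefect_eq_zero (hp : ∀ j, 0 < p j)
    (hV : 0 < capacity p V) {T : Finset (Σ j, N j)} (hT : T.Nonempty) (hT' : T ≠ Finset.univ)
    (h : slopeDefect p V T = 0) :
    ∃ (d₁ d₂ : I → ℕ) (n₁ n₂ : J → ℕ)
      (P : ∀ i, InvertibleMatrix (D i) (Fin (d₁ i) ⊕ Fin (d₂ i)))
      (Q : ∀ j, InvertibleMatrix (N j) (Fin (n₁ j) ⊕ Fin (n₂ j)))
      (V₁ : QuiverDatum (fun i => Fin (d₁ i)) (fun j => Fin (n₁ j)) α)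
      (X : QuiverDatum (fun i => Fin (d₂ i)) (fun j => Fin (n₁ j)) α)
      (V₂ : QuiverDatum (fun i => Fin (d₂ i)) (fun j => Fin (n₂ j)) α),
      V.baseChange P Q = blockTriangular V₁ X V₂ ∧ 0 < capacity p V₁ ∧ 0 < capacity p V₂ ∧
      ∑ j, n₁ j < Fintype.card (Σ j, N j) ∧ ∑ j, n₂ j < Fintype.card (Σ j, N j) := by
  obtain ⟨P, Q, V₁, X, V₂, hblock⟩ :=
    (V.isSubrepresentation_annihilator T).exists_baseChange_eq_blockTriangular
  have hbal : IsBalanced p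
      (fun i => Fintype.card (Fin (Module.finrank ℝ ((D i → ℝ) ⧸ V.annihilator T i))))
      fun j => Fintype.card (Fin (Module.finrank ℝ ((N j → ℝ) ⧸ coordinateSubspace T j))) := by
    simp only [Fintype.card_fin]
    rwa [slopeDefect_eq, sub_eq_zero] at h
  rw [← capacity_baseChange_pos hp P Q, hblock] at hV
  obtain ⟨hV₁, hV₂⟩ := capacity_pos_of_capacity_blockTriangular_pos hp hbal hV
  refine ⟨_, _, _, _, P, Q, V₁, X, V₂, hblock, hV₁, hV₂, ?_, ?_⟩
  · have := sum_finrank_coordinateSubspace_add_card T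
    have := hT.card_pos
    omega
  · rw [sum_finrank_quotient_coordinateSubspace]
    exact T.card_lt_iff_ne_univ.2 hT'

end Splitting

section Existence

variable {I J : Type*} {α : I → J → Type*} [Fintype I] [Fintype J] [∀ i j, Fintype (α i j)]
  {p : J → ℝ} {D : I → Type} {N : J → Type} [∀ i, Fintype (D i)] [∀ j, Fintype (N j)]
  [∀ i, DecidableEq (D i)] [∀ j, DecidableEq (N j)]

theorem hasBlockReduction_of_capacity_pos (hp : ∀ j, 0 < p j) {V : QuiverDatum D N α}
    (hV : 0 < capacity p V) : V.HasBlockReduction p := by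
  induction hM : Fintype.card (Σ j, N j) using Nat.strong_induction_on generalizing D N with
  | _ M ih =>
    subst hM
    rcases isExtremizable_or_exists_slopeDefect_eq_zero hp hV with hext | ⟨R, T, hT, hT', hzero⟩
    · exact hext.hasBlockReduction hp
    obtain ⟨d₁, d₂, n₁, n₂, P, Q, V₁, X, V₂, hblock, hV₁, hV₂, hlt₁, hlt₂⟩ :=
      exists_baseChange_eq_blockTriangular_of_slopeDefect_eq_zero hp (capacity_rotate_pos hp hV R)
        hT hT' hzero
    refine .of_baseChange hp _ _ (.of_baseChange hp P Q ?_ : (V.rotate R).HasBlockReduction p)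
    rw [hblock]
    exact .blockTriangular hp (ih _ hlt₁ hV₁ (by simp)) (ih _ hlt₂ hV₂ (by simp)) X

end Existence

end QuiverDatum

section Sorting

variable {s : ℕ}

lemma finSigmaFinEquiv_eq_fembed (f : Fin s → ℕ) (ℓ : Fin s) (r : Fin (f ℓ)) :
    finSigmaFinEquiv ⟨ℓ, r⟩ = fembed f ℓ r := by
  have hfilter : Finset.univ.filter (fun ℓ' => ℓ' < ℓ) =
      Finset.univ.map (Fin.castLEEmb ℓ.isLt.le) := by
    ext ℓ'
    simp only [Finset.mem_filter_univ, Finset.mem_map, Finset.mem_univ, true_and]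
    exact ⟨fun h => ⟨⟨ℓ', h⟩, rfl⟩, fun ⟨x, hx⟩ => hx ▸ x.isLt⟩
  have hsum : ∑ ℓ' ∈ Finset.univ.filter (fun ℓ' => ℓ' < ℓ), f ℓ' =
      ∑ x : Fin ℓ, f (Fin.castLE ℓ.isLt.le x) := by
    rw [hfilter, Finset.sum_map]
    rfl
  exact Fin.ext ((finSigmaFinEquiv_apply _).trans (congrArg (· + (r : ℕ)) hsum.symm))

lemma exists_sorting {X : Type*} [Fintype X] {n : ℕ} (hX : Fintype.card X = n) (β : X → Fin s) :
    ∃ (f : Fin s → ℕ) (hf : ∑ ℓ, f ℓ = n) (e : X ≃ Fin n),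
      (∀ ℓ, Fintype.card {x // β (e.symm x) = ℓ} = f ℓ) ∧
        ∀ ℓ r, β (e.symm (Fin.cast hf (fembed f ℓ r))) = ℓ := by
  let f ℓ := Fintype.card {x // β x = ℓ}
  let e₁ : (Σ ℓ, Fin (f ℓ)) ≃ X := (Equiv.sigmaCongrRight fun ℓ =>
    (Fintype.equivFin {x // β x = ℓ}).symm).trans (Equiv.sigmaFiberEquiv β)
  have hf : ∑ ℓ, f ℓ = n := by
    rw [← hX, ← Fintype.card_congr e₁, Fintype.card_sigma]
    simp only [Fintype.card_fin]
  let e₂ : (Σ ℓ, Fin (f ℓ)) ≃ Fin n := finSigmaFinEquiv.trans (finCongr hf)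
  refine ⟨f, hf, e₁.symm.trans e₂, fun ℓ => Fintype.card_congr
    ((e₁.symm.trans e₂).symm.subtypeEquiv fun _ => Iff.rfl), fun ℓ r => ?_⟩
  have hsymm : e₂.symm (Fin.cast hf (fembed f ℓ r)) = ⟨ℓ, r⟩ := by
    rw [Equiv.symm_apply_eq, ← finSigmaFinEquiv_eq_fembed]
    rfl
  rw [Equiv.symm_trans_apply, hsymm]
  exact ((Fintype.equivFin {x // β x = ℓ}).symm r).2

end Sorting

namespace QuiverDatum

lemma capacity_eq_of_capacity_baseChange_eq {I J : Type*} {D D' : I → Type*} {N N' : J → Type*}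
    {α : I → J → Type*} [Fintype I] [Fintype J] [∀ i, Fintype (D i)] [∀ j, Fintype (N j)]
    [∀ i, Fintype (D' i)] [∀ j, Fintype (N' j)] [∀ i, DecidableEq (D i)] [∀ j, DecidableEq (N j)]
    [∀ i, DecidableEq (D' i)] [∀ j, DecidableEq (N' j)] [∀ i j, Fintype (α i j)] {p : J → ℝ}
    (hp : ∀ j, 0 < p j) (P : ∀ i, InvertibleMatrix (D i) (D' i))
    (Q : ∀ j, InvertibleMatrix (N j) (N' j)) {V : QuiverDatum D N α} {W : QuiverDatum D' N' α}
    (h : capacity p (V.baseChange P Q) = capacity p W) :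
    capacity p V = capacity p (W.baseChange (fun i => (P i).symm) fun j => (Q j).symm) := by
  rw [capacity_baseChange hp, ← h, ← capacity_baseChange hp, baseChange_symm_baseChange]

end QuiverDatum

theorem feasible_reduction_to_extremizable_general {k m : ℕ} {d : Fin k → ℕ} {n : Fin m → ℕ}
    {A : Fin k → Fin m → ℕ} (p : Fin m → ℝ) (hp : ∀ j, 0 < p j)
    (V : ∀ i : Fin k, ∀ j : Fin m, Fin (A i j) → Matrix (Fin (n j)) (Fin (d i)) ℝ)
    (hfeas : 0 < cap p V) :
    ∃ (s : ℕ) (dd : Fin s → Fin k → ℕ) (nn : Fin s → Fin m → ℕ)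
      (hd' : ∀ i, ∑ ℓ : Fin s, dd ℓ i = d i) (hn' : ∀ j, ∑ ℓ : Fin s, nn ℓ j = n j)
      (Ag : ∀ i : Fin k, Matrix (Fin (d i)) (Fin (d i)) ℝ)
      (Ah : ∀ j : Fin m, Matrix (Fin (n j)) (Fin (n j)) ℝ)
      (Vt : ∀ i : Fin k, ∀ j : Fin m, Fin (A i j) → Matrix (Fin (n j)) (Fin (d i)) ℝ),
      (∀ i, IsUnit (Ag i).det) ∧ (∀ j, IsUnit (Ah j).det) ∧
      (∀ ℓ, ∑ i : Fin k, (dd ℓ i : ℝ) = ∑ j : Fin m, p j * (nn ℓ j : ℝ)) ∧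
      (∀ i j a (ℓ ℓ' : Fin s) (r : Fin (nn ℓ j)) (c : Fin (dd ℓ' i)), ℓ' < ℓ →
        (Ah j * V i j a * (Ag i)⁻¹)
            (Fin.cast (hn' j) (fembed (fun ℓ'' => nn ℓ'' j) ℓ r))
            (Fin.cast (hd' i) (fembed (fun ℓ'' => dd ℓ'' i) ℓ' c)) = 0) ∧
      (∀ i j a (ℓ ℓ' : Fin s) (r : Fin (nn ℓ j)) (c : Fin (dd ℓ' i)),
        Vt i j a (Fin.cast (hn' j) (fembed (fun ℓ'' => nn ℓ'' j) ℓ r))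
            (Fin.cast (hd' i) (fembed (fun ℓ'' => dd ℓ'' i) ℓ' c)) =
          if ℓ = ℓ' then
            (Ah j * V i j a * (Ag i)⁻¹)
              (Fin.cast (hn' j) (fembed (fun ℓ'' => nn ℓ'' j) ℓ r))
              (Fin.cast (hd' i) (fembed (fun ℓ'' => dd ℓ'' i) ℓ' c))
          else 0) ∧
      Extremizable p Vt ∧ cap p V = cap p (fun i j a => (Ah j)⁻¹ * Vt i j a * Ag i) := by
  obtain ⟨P₀, Q₀, s, β, γ, h₀⟩ := QuiverDatum.hasBlockReduction_of_capacity_pos hp hfeas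
  choose dd hd e hdd hβ using fun i => exists_sorting (Fintype.card_fin (d i)) (β i)
  choose nn hn u hnn hγ using fun j => exists_sorting (Fintype.card_fin (n j)) (γ j)
  let P i := (P₀ i).trans (.ofEquiv (e i))
  let Q j := (Q₀ j).trans (.ofEquiv (u j))
  have h := h₀.reindex hp e u
  rw [← QuiverDatum.baseChange_trans] at h
  refine ⟨s, fun ℓ i => dd i ℓ, fun ℓ j => nn j ℓ, hd, hn, fun i => (P i).mat, fun j => (Q j).mat,
    QuiverDatum.blockDiagonal (fun i => β i ∘ (e i).symm) (fun j => γ j ∘ (u j).symm)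
      (QuiverDatum.baseChange P Q V), fun i => (P i).isUnit_det, fun j => (Q j).isUnit_det,
    fun ℓ => ?_, fun i j a ℓ ℓ' r c hlt => ?_, fun i j a ℓ ℓ' r c => ?_, h.isExtremizable, ?_⟩
  · simpa only [QuiverDatum.IsBalanced, Function.comp_apply, hdd, hnn] using h.isBalanced ℓ
  · rw [← (P i).inv_eq_nonsing_inv]
    exact h.eq_zero i j a _ _ (by simpa only [Function.comp_apply, hβ, hγ] using hlt)
  · simp only [QuiverDatum.blockDiagonal, Matrix.of_apply, Function.comp_apply, hβ, hγ,
      ← InvertibleMatrix.inv_eq_nonsing_inv, QuiverDatum.baseChange]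
  · simp only [← InvertibleMatrix.inv_eq_nonsing_inv]
    exact QuiverDatum.capacity_eq_of_capacity_baseChange_eq hp P Q h.capacity_eq

/-- For positive rational weights and a feasible datum `(V, p)`, there
exist a base change `A` and dimension vectors `d¹, …, dˢ` summing to the dimension vector
of `V`, each orthogonal to `p`, such that `A·V` is block upper-triangular with respect to
this decomposition, the block-diagonal part `Ṽ = diag(A·V)` gives an extremizable datum
`(Ṽ, p)`, and `cap(V, p) = cap(A⁻¹·Ṽ, p)`. -/
theorem feasible_reduction_to_extremizable {k m : ℕ} (hk : 0 < k) (hm : 0 < m)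
    {d : Fin k → ℕ} {n : Fin m → ℕ} {A : Fin k → Fin m → ℕ} (p : Fin m → ℚ)
    (hd : ∀ i, 0 < d i) (hn : ∀ j, 0 < n j) (hp : ∀ j, 0 < p j)
    (hbal : ∑ i : Fin k, (d i : ℝ) = ∑ j : Fin m, (p j : ℝ) * (n j : ℝ))
    (V : ∀ i : Fin k, ∀ j : Fin m, Fin (A i j) → Matrix (Fin (n j)) (Fin (d i)) ℝ)
    (hfeas : 0 < cap (fun j => (p j : ℝ)) V) :
    ∃ (s : ℕ) (dd : Fin s → Fin k → ℕ) (nn : Fin s → Fin m → ℕ)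
      (hd' : ∀ i, ∑ ℓ : Fin s, dd ℓ i = d i) (hn' : ∀ j, ∑ ℓ : Fin s, nn ℓ j = n j)
      (Ag : ∀ i : Fin k, Matrix (Fin (d i)) (Fin (d i)) ℝ)
      (Ah : ∀ j : Fin m, Matrix (Fin (n j)) (Fin (n j)) ℝ)
      (Vt : ∀ i : Fin k, ∀ j : Fin m, Fin (A i j) → Matrix (Fin (n j)) (Fin (d i)) ℝ),
      (∀ i, IsUnit (Ag i).det) ∧ (∀ j, IsUnit (Ah j).det) ∧
      -- each dimension vector `d^ℓ` is orthogonal to `p`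
      (∀ ℓ, ∑ i : Fin k, (dd ℓ i : ℝ) = ∑ j : Fin m, (p j : ℝ) * (nn ℓ j : ℝ)) ∧
      -- `A·V` is block upper-triangular of type `(dd, nn)`
      (∀ i j a (ℓ ℓ' : Fin s) (r : Fin (nn ℓ j)) (c : Fin (dd ℓ' i)), ℓ' < ℓ →
        (Ah j * V i j a * (Ag i)⁻¹)
            (Fin.cast (hn' j) (fembed (fun ℓ'' => nn ℓ'' j) ℓ r))
            (Fin.cast (hd' i) (fembed (fun ℓ'' => dd ℓ'' i) ℓ' c)) = 0) ∧
      -- `Vt` is the block-diagonal part of `A·V`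
      (∀ i j a (ℓ ℓ' : Fin s) (r : Fin (nn ℓ j)) (c : Fin (dd ℓ' i)),
        Vt i j a (Fin.cast (hn' j) (fembed (fun ℓ'' => nn ℓ'' j) ℓ r))
            (Fin.cast (hd' i) (fembed (fun ℓ'' => dd ℓ'' i) ℓ' c)) =
          if ℓ = ℓ' then
            (Ah j * V i j a * (Ag i)⁻¹)
              (Fin.cast (hn' j) (fembed (fun ℓ'' => nn ℓ'' j) ℓ r))
              (Fin.cast (hd' i) (fembed (fun ℓ'' => dd ℓ'' i) ℓ' c))
          else 0) ∧
      Extremizable (fun j => (p j : ℝ)) Vt ∧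
      cap (fun j => (p j : ℝ)) V =
        cap (fun j => (p j : ℝ)) (fun i j a => (Ah j)⁻¹ * Vt i j a * Ag i) :=
  feasible_reduction_to_extremizable_general (fun j => (p j : ℝ))
    (fun j => by exact_mod_cast hp j) V hfeas
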